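/- Let i ∈ Σ_{n+1}. If there exists a sequence (σ_1, …, σ_n) ∈ {A, D}^n such that ind_{σ_k}(C_{σ_{k+1}} ∘ ⋯ ∘ C_{σ_n}(i)) = 0 for all k = n, n−1, …, 1, then for every dominant integral weight λ the string polytope Δ_i(λ) is unimodularly equivalent to the Gelfand–Cetlin polytope GC(λ). -/

import Mathlib

open scoped Classical

noncomputable section

namespace StringPolytope

/-! ### Words, reduced words, two-moves -/

/-- the simple transposition `s_a = (a, a+1)` acting on `ℕ` (wires are `1, …, n+1`). -/
def sTrans (a : ℕ) : Equiv.Perm ℕ := Equiv.swap a (a + 1)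

/-- product `s_{i₁} ⋯ s_{i_N}` of the simple transpositions of a word. -/
def wordProd (w : List ℕ) : Equiv.Perm ℕ := (w.map sTrans).prod

/-- the longest element `w₀` of the symmetric group on `{1, …, n+1}`,
sending `k ↦ n + 2 - k` there and fixing everything else. -/
def longestPerm (n : ℕ) : Equiv.Perm ℕ :=
  Function.Involutive.toPerm
    (fun k => if 1 ≤ k ∧ k ≤ n + 1 then n + 2 - k else k)
    (by intro k; dsimp only; split_ifs <;> omega)

/-- `w ∈ Σ_{n+1}`: a reduced word of the longest element of `S_{n+1}`,
i.e. a word over `[n] = {1,…,n}` of length `N = n(n+1)/2` whose product is `w₀`. -/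
def IsReduced (n : ℕ) (w : List ℕ) : Prop :=
  w.length = n * (n + 1) / 2 ∧ (∀ a ∈ w, 1 ≤ a ∧ a ≤ n) ∧ wordProd w = longestPerm n

/-- a single 2-move: exchange two adjacent letters `(a, b)` with `|a - b| > 1`. -/
def TwoMoveStep (w w' : List ℕ) : Prop :=
  ∃ u v a b, (a + 1 < b ∨ b + 1 < a) ∧ w = u ++ a :: b :: v ∧ w' = u ++ b :: a :: v

/-- 2-move equivalence of words. -/
def TwoMoveEquiv : List ℕ → List ℕ → Prop := Relation.ReflTransGen TwoMoveStep

/-- `A_n = (1, 2, …, n)`. -/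
def ascWord (n : ℕ) : List ℕ := (List.range n).map (· + 1)

/-- `D_n = (n, n-1, …, 1)`. -/
def descWord (n : ℕ) : List ℕ := (ascWord n).reverse

/-! ### The wiring diagram -/

/-- the letter `i_j` of `w` (1-based index `j`); the node `t_j` lies in column `i_j`. -/
def letterAt (w : List ℕ) (j : ℕ) : ℕ := w.getD (j - 1) 0

/-- `1 ≤ j ≤ N`: `t_j` is an actual node of the diagram. -/
def ValidNode (w : List ℕ) (j : ℕ) : Prop := 1 ≤ j ∧ j ≤ w.length

/-- the column-to-wire assignment just above node `t_j`
(at the top of the diagram, wire `k` is in column `k`). -/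
def stateAbove (w : List ℕ) (j : ℕ) : Equiv.Perm ℕ := wordProd (w.take (j - 1))

/-- the column-to-wire assignment just below node `t_j`. -/
def stateBelow (w : List ℕ) (j : ℕ) : Equiv.Perm ℕ := wordProd (w.take j)

/-- one of the two wires crossing at node `t_j` (the one leaving upward-left). -/
def wireX (w : List ℕ) (j : ℕ) : ℕ := stateAbove w j (letterAt w j)

/-- the other wire crossing at node `t_j` (the one leaving upward-right). -/
def wireY (w : List ℕ) (j : ℕ) : ℕ := stateAbove w j (letterAt w j + 1)

/-- the node `t_j` lies on the wire `ℓ_r`. -/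
def NodeOnWire (w : List ℕ) (j r : ℕ) : Prop := wireX w j = r ∨ wireY w j = r

/-- given one wire `r` at node `t_j`, the other wire crossing there. -/
def otherWire (w : List ℕ) (j r : ℕ) : ℕ := if wireX w j = r then wireY w j else wireX w j

/-- the column of wire `ℓ_r` at the height of node `t_j`. -/
def wireCol (w : List ℕ) (j r : ℕ) : ℕ := (stateBelow w j).symm r

/-- node `t_j` lies strictly below the wire `ℓ_{n+1}`
(which runs from the bottom-left corner to the top-right corner). -/
def BelowWireLast (n : ℕ) (w : List ℕ) (j : ℕ) : Prop :=
  wireCol w j (n + 1) < letterAt w j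

/-- node `t_j` lies strictly above the wire `ℓ_{n+1}`. -/
def AboveWireLast (n : ℕ) (w : List ℕ) (j : ℕ) : Prop :=
  letterAt w j + 1 < wireCol w j (n + 1)

/-- node `t_j` lies strictly below the wire `ℓ_1`
(which runs from the bottom-right corner to the top-left corner). -/
def BelowWireOne (w : List ℕ) (j : ℕ) : Prop :=
  letterAt w j + 1 < wireCol w j 1

/-- node `t_j` lies strictly above the wire `ℓ_1`. -/
def AboveWireOne (w : List ℕ) (j : ℕ) : Prop :=
  wireCol w j 1 < letterAt w j

/-! ### Rigorous (Gleizer–Postnikov) paths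

A path in `G(i, k)` is encoded by `k` together with the list of its switching
nodes, in order of travel.  Wires `ℓ_1, …, ℓ_k` are oriented upward
(decreasing node index) and the remaining wires downward. -/

/-- the (1-based indices of the) nodes lying on wire `ℓ_r`, in order of increasing index. -/
def nodesOn (w : List ℕ) (r : ℕ) : List ℕ :=
  ((List.range w.length).map (· + 1)).filter (fun j => decide (NodeOnWire w j r))

/-- nodes on wire `ℓ_r` strictly between the nodes `t_a` and `t_b`. -/
def segList (w : List ℕ) (r a b : ℕ) : List ℕ :=
  (nodesOn w r).filter (fun j => decide (min a b < j ∧ j < max a b))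

/-- nodes on wire `ℓ_r` strictly below the node `t_a`. -/
def tailList (w : List ℕ) (r a : ℕ) : List ℕ :=
  (nodesOn w r).filter (fun j => decide (a < j))

/-- a forbidden fragment of `G(i, k)`: the path passes straight through node `t_j`
travelling along the wire `ℓ_r`, where the other wire `ℓ_b` crossing there has the same
orientation as `ℓ_r` and (`r < b` if both upward, `r > b` if both downward). -/
def Forbidden (w : List ℕ) (k j r : ℕ) : Prop :=
  (r ≤ k ∧ otherWire w j r ≤ k ∧ r < otherWire w j r) ∨
  (k < r ∧ k < otherWire w j r ∧ otherWire w j r < r)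

/-- travelling in `G(i,k)`: currently on wire `ℓ_r` at node `t_a` (just switched there),
with future switching nodes `ms`; the travel is legal and ends at `L_{k+1}`. -/
def TravelOK (w : List ℕ) (k : ℕ) : ℕ → ℕ → List ℕ → Prop
  | r, a, [] => r = k + 1 ∧ ∀ j ∈ tailList w r a, ¬ Forbidden w k j r
  | r, a, m :: ms =>
      ValidNode w m ∧ NodeOnWire w m r ∧
      (if r ≤ k then m < a else a < m) ∧
      (∀ j ∈ segList w r a m, ¬ Forbidden w k j r) ∧
      TravelOK w k (otherWire w m r) m ms

/-- all nodes visited after the switch at node `t_a` onto wire `ℓ_r`. -/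
def visitTail (w : List ℕ) : ℕ → ℕ → List ℕ → List ℕ
  | r, a, [] => tailList w r a
  | r, a, m :: ms => segList w r a m ++ m :: visitTail w (otherWire w m r) m ms

/-- the list of all nodes visited by the path (switching nodes and straight passes). -/
def visitList (w : List ℕ) (k : ℕ) : List ℕ → List ℕ
  | [] => []
  | m :: ms => tailList w k m ++ m :: visitTail w (otherWire w m k) m ms

/-- `(k, ms)` encodes a rigorous (Gleizer–Postnikov) path in `G(i, k)`:
it starts at `L_k` going up the wire `ℓ_k`, switches wires exactly at the nodes
listed in `ms`, respects the orientation, ends at `L_{k+1}`, contains no forbidden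
fragment and passes through each node at most once. -/
def IsGPPath (n : ℕ) (w : List ℕ) (k : ℕ) (ms : List ℕ) : Prop :=
  1 ≤ k ∧ k ≤ n ∧
  (match ms with
   | [] => False
   | m :: rest =>
       ValidNode w m ∧ NodeOnWire w m k ∧
       (∀ j ∈ tailList w k m, ¬ Forbidden w k j k) ∧
       TravelOK w k (otherWire w m k) m rest) ∧
  (visitList w k ms).Nodup

/-- the set `GP(i)` of all rigorous paths of `G(i)`. -/
def GP (n : ℕ) (w : List ℕ) : Set (ℕ × List ℕ) := {p | IsGPPath n w p.1 p.2}

/-- `|GP(i)|`, the number of rigorous paths. -/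
def numGP (n : ℕ) (w : List ℕ) : ℕ := (GP n w).ncard

/-- the successive switches of a path: `(node, from-wire, to-wire)`. -/
def pathSwitches (w : List ℕ) : ℕ → List ℕ → List (ℕ × ℕ × ℕ)
  | _, [] => []
  | r, m :: ms => (m, r, otherWire w m r) :: pathSwitches w (otherWire w m r) ms

/-- the wire-expression of a path: the successive wires travelled. -/
def wireSeq (w : List ℕ) : ℕ → List ℕ → List ℕ
  | r, [] => [r]
  | r, m :: ms => r :: wireSeq w (otherWire w m r) ms

/-- the peaks of a path: switching nodes where the path switches from an
upward wire to a downward wire. -/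
def peaks (w : List ℕ) (k : ℕ) (ms : List ℕ) : List ℕ :=
  ((pathSwitches w k ms).filter (fun e => decide (e.2.1 ≤ k ∧ k < e.2.2))).map (·.1)

/-! ### String cone, `λ`-cone, string polytope -/

/-- `N = n(n+1)/2`, the number of nodes. -/
abbrev Dim (n : ℕ) : ℕ := n * (n + 1) / 2

/-- the coefficient `a_j` of `t_j` in the string inequality of the path `(k, ms)`:
`+1` if the path switches at `t_j` from `ℓ_r` to `ℓ_s` with `r < s`,
`-1` if it switches with `r > s`, and `0` otherwise. -/
def coeff (w : List ℕ) (k : ℕ) (ms : List ℕ) (j : ℕ) : ℝ :=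
  ((pathSwitches w k ms).map (fun e =>
    if e.1 = j then (if e.2.1 < e.2.2 then (1 : ℝ) else -1) else 0)).sum

/-- the (primitive inward normal) coefficient vector of the string inequality of a path. -/
def normalVec (n : ℕ) (w : List ℕ) (p : ℕ × List ℕ) : Fin (Dim n) → ℝ :=
  fun j => coeff w p.1 p.2 ((j : ℕ) + 1)

/-- the left-hand side `∑ a_j t_j` of the string inequality of the path `p`. -/
def stringIneq (n : ℕ) (w : List ℕ) (p : ℕ × List ℕ) (t : Fin (Dim n) → ℝ) : ℝ :=
  ∑ j : Fin (Dim n), normalVec n w p j * t j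

/-- the string cone `C_i ⊆ ℝ^N`. -/
def stringCone (n : ℕ) (w : List ℕ) : Set (Fin (Dim n) → ℝ) :=
  {t | ∀ p ∈ GP n w, 0 ≤ stringIneq n w p t}

/-- the polyhedron cut out by all string inequalities except the one of `p₀`. -/
def stringConeExcept (n : ℕ) (w : List ℕ) (p₀ : ℕ × List ℕ) : Set (Fin (Dim n) → ℝ) :=
  {t | ∀ p ∈ GP n w, p ≠ p₀ → 0 ≤ stringIneq n w p t}

/-- the coefficient `a_k` in the `λ`-inequality of node `t_j`:
`1` if `t_k` is one column left or right of `t_j`, `-2` if in the same column. -/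
def lamCoeff (w : List ℕ) (j k : ℕ) : ℝ :=
  if letterAt w k = letterAt w j then -2
  else if letterAt w k = letterAt w j + 1 ∨ letterAt w k + 1 = letterAt w j then 1
  else 0

/-- the `λ`-inequality of node `t_{j+1}`:
`t_j ≤ λ_{i_j} + ∑_{k > j} a_k t_k`. -/
def LamIneq (n : ℕ) (w : List ℕ) (lam : ℕ → ℤ) (j : Fin (Dim n)) (t : Fin (Dim n) → ℝ) : Prop :=
  t j ≤ (lam (letterAt w ((j : ℕ) + 1)) : ℝ) +
    ∑ k : Fin (Dim n),
      (if (j : ℕ) < (k : ℕ) then lamCoeff w ((j : ℕ) + 1) ((k : ℕ) + 1) else 0) * t k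

/-- the `λ`-cone `C_i^λ ⊆ ℝ^N`. -/
def lamCone (n : ℕ) (w : List ℕ) (lam : ℕ → ℤ) : Set (Fin (Dim n) → ℝ) :=
  {t | ∀ j, LamIneq n w lam j t}

/-- the polyhedron cut out by all `λ`-inequalities except the one of `j₀`. -/
def lamConeExcept (n : ℕ) (w : List ℕ) (lam : ℕ → ℤ) (j₀ : Fin (Dim n)) :
    Set (Fin (Dim n) → ℝ) :=
  {t | ∀ j, j ≠ j₀ → LamIneq n w lam j t}

/-- the string polytope `Δ_i(λ) = C_i ∩ C_i^λ`. -/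
def stringPolytope (n : ℕ) (w : List ℕ) (lam : ℕ → ℤ) : Set (Fin (Dim n) → ℝ) :=
  stringCone n w ∩ lamCone n w lam

/-- `λ = λ_1 ϖ_1 + ⋯ + λ_n ϖ_n` is a dominant integral weight: all `λ_j ≥ 0`. -/
def Dominant (n : ℕ) (lam : ℕ → ℤ) : Prop := ∀ j, 1 ≤ j → j ≤ n → 0 ≤ lam j

/-- `λ` is a regular dominant integral weight: all `λ_j > 0`. -/
def RegularDominant (n : ℕ) (lam : ℕ → ℤ) : Prop := ∀ j, 1 ≤ j → j ≤ n → 0 < lam j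

/-! ### Unimodular equivalence, Gelfand–Cetlin polytope, facets -/

/-- `P` and `Q` are unimodularly equivalent: `Q = M(P) + v` with `M ∈ GL(m, ℤ)`, `v ∈ ℤ^m`. -/
def UnimodEquiv {m : ℕ} (P Q : Set (Fin m → ℝ)) : Prop :=
  ∃ (M : Matrix (Fin m) (Fin m) ℤ) (v : Fin m → ℤ), IsUnit M.det ∧
    Q = (fun x i => (∑ j, (M i j : ℝ) * x j) + (v i : ℝ)) '' P

/-- the entry `x_{k,j}` (`1 ≤ j ≤ k ≤ n+1`) of a Gelfand–Cetlin pattern, where the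
top row is `x_{n+1,j} = λ_j + ⋯ + λ_n` and `x_{n+1,n+1} = 0`; the pair `(k, j)` is
encoded as the coordinate `k(k-1)/2 + (j-1)` of `ℝ^N`. -/
def gcX (n : ℕ) (lam : ℕ → ℤ) (x : Fin (Dim n) → ℝ) (k j : ℕ) : ℝ :=
  if k = n + 1 then (if j ≤ n then ∑ t ∈ Finset.Icc j n, (lam t : ℝ) else 0)
  else if h : k * (k - 1) / 2 + (j - 1) < Dim n then x ⟨k * (k - 1) / 2 + (j - 1), h⟩ else 0

/-- the Gelfand–Cetlin polytope `GC(λ) ⊆ ℝ^N`. -/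
def GCPolytope (n : ℕ) (lam : ℕ → ℤ) : Set (Fin (Dim n) → ℝ) :=
  {x | ∀ k j, 1 ≤ k → k ≤ n → 1 ≤ j → j ≤ k →
      gcX n lam x k j ≤ gcX n lam x (k + 1) j ∧
      gcX n lam x (k + 1) (j + 1) ≤ gcX n lam x k j}

/-- a face of a convex set: a convex extreme subset. -/
def IsFaceSet {m : ℕ} (S F : Set (Fin m → ℝ)) : Prop := IsExtreme ℝ S F ∧ Convex ℝ F

/-- a facet: a maximal proper face. -/
def IsFacet {m : ℕ} (S F : Set (Fin m → ℝ)) : Prop :=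
  IsFaceSet S F ∧ F ≠ S ∧ ∀ G, IsFaceSet S G → G ≠ S → F ⊆ G → F = G

/-- the number of facets. -/
def numFacets {m : ℕ} (S : Set (Fin m → ℝ)) : ℕ := {F | IsFacet S F}.ncard

/-- combinatorial equivalence: an inclusion-preserving bijection between face lattices. -/
def CombEquiv {m : ℕ} (S T : Set (Fin m → ℝ)) : Prop :=
  ∃ e : {F // IsFaceSet S F} ≃ {F // IsFaceSet T F},
    ∀ F G : {F // IsFaceSet S F}, F.1 ⊆ G.1 ↔ (e F).1 ⊆ (e G).1

/-! ### Indices, contractions and extensions -/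

/-- the `D`-index `ind_D(i) = |i_D^+|` for a decomposition `i ∼ i_D^- D_n i_D^+`
(independent of the decomposition). -/
def indD (n : ℕ) (w : List ℕ) : ℕ :=
  sInf {s | ∃ u v : List ℕ, v.length = s ∧ TwoMoveEquiv w (u ++ descWord n ++ v)}

/-- the `A`-index `ind_A(i) = |i_A^+|` for a decomposition `i ∼ i_A^- A_n i_A^+`. -/
def indA (n : ℕ) (w : List ℕ) : ℕ :=
  sInf {s | ∃ u v : List ℕ, v.length = s ∧ TwoMoveEquiv w (u ++ ascWord n ++ v)}

/-- `w'` is a `D`-contraction `C_D(w) = i_D^- (i_D^+ - 1)` of `w ∈ Σ_{n+1}`. -/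
def IsContractionD (n : ℕ) (w w' : List ℕ) : Prop :=
  ∃ u v : List ℕ, TwoMoveEquiv w (u ++ descWord n ++ v) ∧ w' = u ++ v.map (· - 1)

/-- `w'` is an `A`-contraction `C_A(w) = (i_A^- - 1) i_A^+` of `w ∈ Σ_{n+1}`. -/
def IsContractionA (n : ℕ) (w w' : List ℕ) : Prop :=
  ∃ u v : List ℕ, TwoMoveEquiv w (u ++ ascWord n ++ v) ∧ w' = u.map (· - 1) ++ v

/-- the `D`-extension `E_D(s) : Σ_{n+1} → Σ_{n+2}`,
`i = i^-(s) i^+(s) ↦ i^-(s) D_{n+1} (i^+(s) + 1)` where `|i^+(s)| = s`. -/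
def extD (n : ℕ) (s : ℕ) (w : List ℕ) : List ℕ :=
  w.take (w.length - s) ++ descWord (n + 1) ++ (w.drop (w.length - s)).map (· + 1)

/-- the `A`-extension `E_A(s) : Σ_{n+1} → Σ_{n+2}`,
`i = i^-(s) i^+(s) ↦ (i^-(s) + 1) A_{n+1} i^+(s)`. -/
def extA (n : ℕ) (s : ℕ) (w : List ℕ) : List ℕ :=
  (w.take (w.length - s)).map (· + 1) ++ ascWord (n + 1) ++ w.drop (w.length - s)

/-- there exists `(σ_1, …, σ_n) ∈ {A, D}^n` (here `true = D`, `false = A`) such that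
`ind_{σ_k}(C_{σ_{k+1}} ∘ ⋯ ∘ C_{σ_n}(i)) = 0` for all `k = n, …, 1`. -/
def SimplicialWord (n : ℕ) (w : List ℕ) : Prop :=
  ∃ (σ : ℕ → Bool) (c : ℕ → List ℕ), c n = w ∧
    ∀ k, 1 ≤ k → k ≤ n →
      (if σ k then IsContractionD k (c k) (c (k - 1)) ∧ indD k (c k) = 0
       else IsContractionA k (c k) (c (k - 1)) ∧ indA k (c k) = 0)


/-- the `D`-coindex `coind_D(i) = |i_D^-|`. -/
def coindD (n : ℕ) (w : List ℕ) : ℕ :=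
  sInf {s | ∃ u v : List ℕ, u.length = s ∧ TwoMoveEquiv w (u ++ descWord n ++ v)}

/-- the `A`-coindex `coind_A(i) = |i_A^-|`. -/
def coindA (n : ℕ) (w : List ℕ) : ℕ :=
  sInf {s | ∃ u v : List ℕ, u.length = s ∧ TwoMoveEquiv w (u ++ ascWord n ++ v)}

/-- the `a`-th (0-based) coordinate of a point of `ℝ^N`. -/
def entry (n : ℕ) (t : Fin (Dim n) → ℝ) (a : ℕ) : ℝ :=
  if h : a < Dim n then t ⟨a, h⟩ else 0

/-- the product of cones
`t_1 ≥ 0`, `t_2 ≥ t_3 ≥ 0`, …, `t_{N-n+1} ≥ ⋯ ≥ t_N ≥ 0` (in `ℝ^N`, 1-based: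
for `k = 1, …, n` the chain `t_{k(k-1)/2+1} ≥ ⋯ ≥ t_{k(k-1)/2+k} ≥ 0`). -/
def chainCone (n : ℕ) : Set (Fin (Dim n) → ℝ) :=
  {t | ∀ k j, 1 ≤ k → k ≤ n → 1 ≤ j → j ≤ k →
    (if j = k then 0 else entry n t (k * (k - 1) / 2 + j)) ≤
      entry n t (k * (k - 1) / 2 + (j - 1))}


/-! ### Basic facts on words and states -/

lemma wordProd_append (u v : List ℕ) : wordProd (u ++ v) = wordProd u * wordProd v := by
  simp [wordProd]

lemma wordProd_singleton (a : ℕ) : wordProd [a] = sTrans a := by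
  simp [wordProd]

lemma letterAt_append_left (u v : List ℕ) (j : ℕ) (h1 : 1 ≤ j) (h2 : j ≤ u.length) :
    letterAt (u ++ v) j = letterAt u j := by
  unfold letterAt
  rw [List.getD_append _ _ _ _ (by omega)]

lemma letterAt_append_right (u v : List ℕ) (j : ℕ) (h1 : 1 ≤ j) :
    letterAt (u ++ v) (u.length + j) = letterAt v j := by
  unfold letterAt
  rw [List.getD_append_right _ _ _ _ (by omega)]
  congr 1
  omega

lemma stateAbove_append_left (u v : List ℕ) (j : ℕ) (h2 : j ≤ u.length + 1) :
    stateAbove (u ++ v) j = stateAbove u j := by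
  unfold stateAbove
  rw [List.take_append_of_le_length (by omega)]

lemma stateAbove_append_right (u v : List ℕ) (j : ℕ) (h1 : 1 ≤ j) :
    stateAbove (u ++ v) (u.length + j) = wordProd u * stateAbove v j := by
  unfold stateAbove
  rw [show u.length + j - 1 = u.length + (j - 1) by omega, List.take_length_add_append,
    wordProd_append]

lemma wireX_append_left (u v : List ℕ) (j : ℕ) (h1 : 1 ≤ j) (h2 : j ≤ u.length) :
    wireX (u ++ v) j = wireX u j := by
  unfold wireX
  rw [stateAbove_append_left _ _ _ (by omega), letterAt_append_left _ _ _ h1 h2]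

lemma wireY_append_left (u v : List ℕ) (j : ℕ) (h1 : 1 ≤ j) (h2 : j ≤ u.length) :
    wireY (u ++ v) j = wireY u j := by
  unfold wireY
  rw [stateAbove_append_left _ _ _ (by omega), letterAt_append_left _ _ _ h1 h2]

lemma wireX_append_right (u v : List ℕ) (j : ℕ) (h1 : 1 ≤ j) :
    wireX (u ++ v) (u.length + j) = wordProd u (wireX v j) := by
  unfold wireX
  rw [stateAbove_append_right _ _ _ h1, letterAt_append_right _ _ _ h1]; rfl

lemma wireY_append_right (u v : List ℕ) (j : ℕ) (h1 : 1 ≤ j) :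
    wireY (u ++ v) (u.length + j) = wordProd u (wireY v j) := by
  unfold wireY
  rw [stateAbove_append_right _ _ _ h1, letterAt_append_right _ _ _ h1]; rfl

lemma stateAbove_succ (w : List ℕ) (j : ℕ) (h1 : 1 ≤ j) (h2 : j ≤ w.length) :
    stateAbove w (j + 1) = stateAbove w j * sTrans (letterAt w j) := by
  unfold stateAbove letterAt
  obtain ⟨i, rfl⟩ : ∃ i, j = i + 1 := ⟨j - 1, by omega⟩
  simp only [Nat.add_sub_cancel]
  rw [List.take_succ_eq_append_getElem (by omega), wordProd_append, wordProd_singleton,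
    List.getD_eq_getElem _ _ (by omega)]

lemma stateAbove_one (w : List ℕ) : stateAbove w 1 = 1 := by
  simp [stateAbove, wordProd]

lemma stateAbove_last (w : List ℕ) : stateAbove w (w.length + 1) = wordProd w := by
  simp [stateAbove]

lemma sTrans_apply (a c : ℕ) :
    sTrans a c = if c = a then a + 1 else if c = a + 1 then a else c := by
  simp [sTrans, Equiv.swap_apply_def]

lemma sTrans_comm (a b : ℕ) (h : a + 1 < b ∨ b + 1 < a) :
    sTrans a * sTrans b = sTrans b * sTrans a := by
  ext c
  simp only [Equiv.Perm.mul_apply, sTrans_apply]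
  split_ifs <;> omega

/-- two nodes share a wire -/
def Share (w : List ℕ) (q q' : ℕ) : Prop := ∃ r, NodeOnWire w q r ∧ NodeOnWire w q' r

/-- two letters do not commute -/
def Near (a b : ℕ) : Prop := a ≤ b + 1 ∧ b ≤ a + 1

/-- `f` is an isomorphism of wiring diagrams from that of `w'` to that of `w`. -/
structure SimVia (w w' : List ℕ) (f : Equiv.Perm ℕ) : Prop where
  len : w.length = w'.length
  valid : ∀ q, ValidNode w' q ↔ ValidNode w (f q)
  letter : ∀ q, ValidNode w' q → letterAt w (f q) = letterAt w' q
  wx : ∀ q, ValidNode w' q → wireX w (f q) = wireX w' q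
  wy : ∀ q, ValidNode w' q → wireY w (f q) = wireY w' q
  ord : ∀ q q', ValidNode w' q → ValidNode w' q' → q < q' →
    (Near (letterAt w' q) (letterAt w' q') ∨ Share w' q q') → f q < f q'

lemma SimVia.refl (w : List ℕ) : SimVia w w 1 :=
  ⟨rfl, fun _ => Iff.rfl, fun _ _ => rfl, fun _ _ => rfl, fun _ _ => rfl,
    fun _ _ _ _ h _ => h⟩

lemma SimVia.trans {w w' w'' : List ℕ} {f g : Equiv.Perm ℕ} (h : SimVia w w' f)
    (h' : SimVia w' w'' g) : SimVia w w'' (f * g) := by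
  refine ⟨h.len.trans h'.len, fun q => (h'.valid q).trans (h.valid _), ?_, ?_, ?_, ?_⟩
  · intro q hq
    exact (h.letter _ ((h'.valid q).1 hq)).trans (h'.letter q hq)
  · intro q hq
    exact (h.wx _ ((h'.valid q).1 hq)).trans (h'.wx q hq)
  · intro q hq
    exact (h.wy _ ((h'.valid q).1 hq)).trans (h'.wy q hq)
  · intro q q' hq hq' hlt hns
    refine h.ord _ _ ((h'.valid q).1 hq) ((h'.valid q').1 hq') (h'.ord q q' hq hq' hlt hns) ?_
    rcases hns with hn | ⟨r, hr, hr'⟩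
    · left
      rw [h'.letter q hq, h'.letter q' hq']; exact hn
    · right
      refine ⟨r, ?_, ?_⟩
      · unfold NodeOnWire; rw [h'.wx q hq, h'.wy q hq]; exact hr
      · unfold NodeOnWire; rw [h'.wx q' hq', h'.wy q' hq']; exact hr'

lemma pair_data (a b : ℕ) (h : a + 1 < b ∨ b + 1 < a) :
    letterAt [a, b] 1 = a ∧ letterAt [a, b] 2 = b ∧ wireX [a, b] 1 = a ∧ wireY [a, b] 1 = a + 1 ∧
    wireX [a, b] 2 = b ∧ wireY [a, b] 2 = b + 1 := by
  refine ⟨rfl, rfl, ?_, ?_, ?_, ?_⟩ <;>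
    simp [wireX, wireY, stateAbove, wordProd, letterAt, sTrans_apply] <;> split_ifs <;> omega

lemma SimVia.step {w w' : List ℕ} (h : TwoMoveStep w w') : ∃ f, SimVia w w' f := by
  obtain ⟨u, v, a, b, hab, rfl, rfl⟩ := h
  have key : ∀ q, 1 ≤ q ∧ q ≤ u.length ∨ q = u.length + 1 ∨ q = u.length + 2 ∨
      (∃ j, 1 ≤ j ∧ q = (u.length + 2) + j) ∨ q = 0 := by
    intro q
    by_cases h : q ≤ u.length + 2
    · omega
    · right; right; right; left
      exact ⟨q - (u.length + 2), by omega, by omega⟩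
  set f := Equiv.swap (u.length + 1) (u.length + 2) with hf
  have fv : ∀ q, f q = if q = u.length + 1 then u.length + 2 else
      if q = u.length + 2 then u.length + 1 else q := by
    intro q; rw [hf, Equiv.swap_apply_def]
  have e1 : u ++ a :: b :: v = u ++ ([a, b] ++ v) := by simp
  have e2 : u ++ b :: a :: v = u ++ ([b, a] ++ v) := by simp
  have e1' : u ++ ([a, b] ++ v) = (u ++ [a, b]) ++ v := by simp
  have e2' : u ++ ([b, a] ++ v) = (u ++ [b, a]) ++ v := by simp
  have l1 : (u ++ [a, b]).length = u.length + 2 := by simp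
  have l2 : (u ++ [b, a]).length = u.length + 2 := by simp
  have hwp : wordProd (u ++ [a, b]) = wordProd (u ++ [b, a]) := by
    rw [wordProd_append, wordProd_append]
    congr 1
    simpa [wordProd] using sTrans_comm a b hab
  obtain ⟨A1, A2, A3, A4, A5, A6⟩ := pair_data a b hab
  obtain ⟨B1, B2, B3, B4, B5, B6⟩ := pair_data b a (by omega)
  rw [e1, e2]
  have main : ∀ q, ValidNode (u ++ ([b, a] ++ v)) q →
      letterAt (u ++ ([a, b] ++ v)) (f q) = letterAt (u ++ ([b, a] ++ v)) q ∧
      wireX (u ++ ([a, b] ++ v)) (f q) = wireX (u ++ ([b, a] ++ v)) q ∧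
      wireY (u ++ ([a, b] ++ v)) (f q) = wireY (u ++ ([b, a] ++ v)) q := by
    intro q hq
    rw [fv q]
    rcases key q with ⟨h1, h2⟩ | h | h | ⟨j, h1, h2⟩ | h
    · rw [if_neg (by omega), if_neg (by omega)]
      simp only [letterAt_append_left _ _ _ h1 h2, wireX_append_left _ _ _ h1 h2,
        wireY_append_left _ _ _ h1 h2, and_self]
    · rw [if_pos h, h]
      simp only [letterAt_append_right _ _ _ (by omega : 1 ≤ 1),
        wireX_append_right _ _ _ (by omega : 1 ≤ 1), wireY_append_right _ _ _ (by omega : 1 ≤ 1),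
        letterAt_append_right _ _ _ (by omega : 1 ≤ 2),
        wireX_append_right _ _ _ (by omega : 1 ≤ 2), wireY_append_right _ _ _ (by omega : 1 ≤ 2)]
      rw [letterAt_append_left _ _ _ (by omega) (by simp), letterAt_append_left _ _ _ (by omega) (by simp),
        wireX_append_left _ _ _ (by omega) (by simp), wireX_append_left _ _ _ (by omega) (by simp),
        wireY_append_left _ _ _ (by omega) (by simp), wireY_append_left _ _ _ (by omega) (by simp),
        A2, A5, A6, B1, B3, B4]
      simp
    · rw [if_neg (by omega), if_pos h, h]
      simp only [letterAt_append_right _ _ _ (by omega : 1 ≤ 1),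
        wireX_append_right _ _ _ (by omega : 1 ≤ 1), wireY_append_right _ _ _ (by omega : 1 ≤ 1),
        letterAt_append_right _ _ _ (by omega : 1 ≤ 2),
        wireX_append_right _ _ _ (by omega : 1 ≤ 2), wireY_append_right _ _ _ (by omega : 1 ≤ 2)]
      rw [letterAt_append_left _ _ _ (by omega) (by simp), letterAt_append_left _ _ _ (by omega) (by simp),
        wireX_append_left _ _ _ (by omega) (by simp), wireX_append_left _ _ _ (by omega) (by simp),
        wireY_append_left _ _ _ (by omega) (by simp), wireY_append_left _ _ _ (by omega) (by simp),
        A1, A3, A4, B2, B5, B6]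
      simp
    · rw [if_neg (by omega), if_neg (by omega), h2, e1', e2']
      have La := letterAt_append_right (u ++ [a, b]) v j h1
      have Lb := letterAt_append_right (u ++ [b, a]) v j h1
      have Xa := wireX_append_right (u ++ [a, b]) v j h1
      have Xb := wireX_append_right (u ++ [b, a]) v j h1
      have Ya := wireY_append_right (u ++ [a, b]) v j h1
      have Yb := wireY_append_right (u ++ [b, a]) v j h1
      rw [l1] at La Xa Ya
      rw [l2] at Lb Xb Yb
      rw [La, Lb, Xa, Xb, Ya, Yb, hwp]
      simp
    · exact absurd hq.1 (by omega)
  have hlen : (u ++ ([a, b] ++ v)).length = (u ++ ([b, a] ++ v)).length := by simp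
  have hlen2 : (u ++ ([b, a] ++ v)).length = u.length + 2 + v.length := by simp; omega
  refine ⟨f, hlen, ?_, fun q hq => (main q hq).1, fun q hq => (main q hq).2.1,
    fun q hq => (main q hq).2.2, ?_⟩
  · intro q
    unfold ValidNode
    rw [hlen, hlen2, fv q]
    split_ifs <;> omega
  · intro q q' hq hq' hlt hns
    by_cases hc : q = u.length + 1 ∧ q' = u.length + 2
    · exfalso
      obtain ⟨rfl, rfl⟩ := hc
      unfold Share NodeOnWire at hns
      simp only [letterAt_append_right _ _ _ (by omega : 1 ≤ 1),
        wireX_append_right _ _ _ (by omega : 1 ≤ 1), wireY_append_right _ _ _ (by omega : 1 ≤ 1),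
        letterAt_append_right _ _ _ (by omega : 1 ≤ 2),
        wireX_append_right _ _ _ (by omega : 1 ≤ 2), wireY_append_right _ _ _ (by omega : 1 ≤ 2)] at hns
      rw [letterAt_append_left _ _ _ (by omega) (by simp), letterAt_append_left _ _ _ (by omega) (by simp),
        wireX_append_left _ _ _ (by omega) (by simp), wireX_append_left _ _ _ (by omega) (by simp),
        wireY_append_left _ _ _ (by omega) (by simp), wireY_append_left _ _ _ (by omega) (by simp),
        B1, B2, B3, B4, B5, B6] at hns
      rcases hns with h | ⟨r, h1, h2⟩
      · unfold Near at h; omega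
      · rcases h1 with h1 | h1 <;> rcases h2 with h2 | h2 <;>
        · have := (wordProd u).injective (h1.trans h2.symm)
          omega
    · rw [fv q, fv q']
      split_ifs <;> omega

lemma SimVia.of_equiv {w w' : List ℕ} (h : TwoMoveEquiv w w') : ∃ f, SimVia w w' f := by
  induction h with
  | refl => exact ⟨1, SimVia.refl w⟩
  | tail _ hs ih =>
    obtain ⟨f, hf⟩ := ih
    obtain ⟨g, hg⟩ := SimVia.step hs
    exact ⟨f * g, hf.trans hg⟩


/-! ### Ascending and descending words, shifts -/

lemma ascWord_length (m : ℕ) : (ascWord m).length = m := by simp [ascWord]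

lemma descWord_length (m : ℕ) : (descWord m).length = m := by simp [descWord, ascWord]

lemma letterAt_ascWord (m p : ℕ) (h1 : 1 ≤ p) (h2 : p ≤ m) : letterAt (ascWord m) p = p := by
  unfold letterAt
  rw [List.getD_eq_getElem _ _ (by rw [ascWord_length]; omega)]
  simp [ascWord]
  omega

lemma letterAt_descWord (m p : ℕ) (h1 : 1 ≤ p) (h2 : p ≤ m) :
    letterAt (descWord m) p = m + 1 - p := by
  unfold letterAt
  rw [List.getD_eq_getElem _ _ (by rw [descWord_length]; omega)]
  simp [descWord, ascWord]
  omega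

lemma stateAbove_descWord (m p : ℕ) (h1 : 1 ≤ p) (h2 : p ≤ m + 1) : ∀ c,
    stateAbove (descWord m) p c =
      if c = m + 2 - p then m + 1 else if m + 2 - p < c ∧ c ≤ m + 1 then c - 1 else c := by
  induction p, h1 using Nat.le_induction with
  | base =>
    intro c
    rw [stateAbove_one, Equiv.Perm.one_apply]
    split_ifs <;> omega
  | succ p hp ih =>
    intro c
    rw [stateAbove_succ _ _ hp (by rw [descWord_length]; omega),
      letterAt_descWord _ _ hp (by omega), Equiv.Perm.mul_apply, ih (by omega), sTrans_apply]
    split_ifs <;> omega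

lemma stateAbove_ascWord (m p : ℕ) (h1 : 1 ≤ p) (h2 : p ≤ m + 1) : ∀ c,
    stateAbove (ascWord m) p c =
      if c = p then 1 else if 1 ≤ c ∧ c < p then c + 1 else c := by
  induction p, h1 using Nat.le_induction with
  | base =>
    intro c
    rw [stateAbove_one, Equiv.Perm.one_apply]
    split_ifs <;> omega
  | succ p hp ih =>
    intro c
    rw [stateAbove_succ _ _ hp (by rw [ascWord_length]; omega),
      letterAt_ascWord _ _ hp (by omega), Equiv.Perm.mul_apply, ih (by omega), sTrans_apply]
    split_ifs <;> omega

lemma wireX_descWord (m p : ℕ) (h1 : 1 ≤ p) (h2 : p ≤ m) :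
    wireX (descWord m) p = m + 1 - p := by
  unfold wireX
  rw [letterAt_descWord _ _ h1 h2, stateAbove_descWord _ _ h1 (by omega)]
  split_ifs <;> omega

lemma wireY_descWord (m p : ℕ) (h1 : 1 ≤ p) (h2 : p ≤ m) :
    wireY (descWord m) p = m + 1 := by
  unfold wireY
  rw [letterAt_descWord _ _ h1 h2, stateAbove_descWord _ _ h1 (by omega)]
  split_ifs <;> omega

lemma wireX_ascWord (m p : ℕ) (h1 : 1 ≤ p) (h2 : p ≤ m) :
    wireX (ascWord m) p = 1 := by
  unfold wireX
  rw [letterAt_ascWord _ _ h1 h2, stateAbove_ascWord _ _ h1 (by omega)]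
  split_ifs <;> omega

lemma wireY_ascWord (m p : ℕ) (h1 : 1 ≤ p) (h2 : p ≤ m) :
    wireY (ascWord m) p = p + 1 := by
  unfold wireY
  rw [letterAt_ascWord _ _ h1 h2, stateAbove_ascWord _ _ h1 (by omega)]
  split_ifs <;> omega

lemma wordProd_descWord (m c : ℕ) : wordProd (descWord m) c =
    if c = 1 then m + 1 else if 1 < c ∧ c ≤ m + 1 then c - 1 else c := by
  rw [← stateAbove_last, descWord_length, stateAbove_descWord _ _ (by omega) (by omega)]
  split_ifs <;> omega

lemma wordProd_ascWord (m c : ℕ) : wordProd (ascWord m) c =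
    if c = m + 1 then 1 else if 1 ≤ c ∧ c < m + 1 then c + 1 else c := by
  rw [← stateAbove_last, ascWord_length, stateAbove_ascWord _ _ (by omega) (by omega)]

lemma wordProd_shift (u : List ℕ) : ∀ c, wordProd (u.map (· + 1)) (c + 1) = wordProd u c + 1 := by
  induction u with
  | nil => intro c; simp [wordProd]
  | cons a u ih =>
    intro c
    have h1 : wordProd ((a :: u).map (· + 1)) = sTrans (a + 1) * wordProd (u.map (· + 1)) := by
      simp [wordProd]
    have h2 : wordProd (a :: u) = sTrans a * wordProd u := by simp [wordProd]
    rw [h1, h2, Equiv.Perm.mul_apply, Equiv.Perm.mul_apply, ih, sTrans_apply, sTrans_apply]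
    split_ifs <;> omega

lemma wordProd_shift_zero (u : List ℕ) : wordProd (u.map (· + 1)) 0 = 0 := by
  induction u with
  | nil => simp [wordProd]
  | cons a u ih =>
    have h1 : wordProd ((a :: u).map (· + 1)) = sTrans (a + 1) * wordProd (u.map (· + 1)) := by
      simp [wordProd]
    rw [h1, Equiv.Perm.mul_apply, ih, sTrans_apply]
    simp

lemma letterAt_shift (u : List ℕ) (j : ℕ) (h1 : 1 ≤ j) (h2 : j ≤ u.length) :
    letterAt (u.map (· + 1)) j = letterAt u j + 1 := by
  unfold letterAt
  rw [List.getD_eq_getElem _ _ (by simp; omega), List.getD_eq_getElem _ _ (by omega)]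
  simp

lemma wireX_shift (u : List ℕ) (j : ℕ) (h1 : 1 ≤ j) (h2 : j ≤ u.length) :
    wireX (u.map (· + 1)) j = wireX u j + 1 := by
  unfold wireX stateAbove
  rw [letterAt_shift _ _ h1 h2, ← List.map_take, wordProd_shift]

lemma wireY_shift (u : List ℕ) (j : ℕ) (h1 : 1 ≤ j) (h2 : j ≤ u.length) :
    wireY (u.map (· + 1)) j = wireY u j + 1 := by
  unfold wireY stateAbove
  rw [letterAt_shift _ _ h1 h2, ← List.map_take, wordProd_shift]

/-! ### The canonical words -/

/-- The canonical word of a sequence `σ`. -/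
def canon (σ : ℕ → Bool) : ℕ → List ℕ
  | 0 => []
  | k + 1 => if σ (k + 1) then canon σ k ++ descWord (k + 1)
      else (canon σ k).map (· + 1) ++ ascWord (k + 1)

/-- triangular numbers: `tri κ = κ (κ - 1) / 2`. -/
def tri (κ : ℕ) : ℕ := κ * (κ - 1) / 2

lemma tri_succ (k : ℕ) : tri (k + 1) = tri k + k := by
  unfold tri
  rcases k with _ | k
  · rfl
  · have h : (k + 1 + 1) * (k + 1 + 1 - 1) = (k + 1) * (k + 1 - 1) + (k + 1) * 2 := by
      simp only [Nat.add_sub_cancel]; ring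
    rw [h, Nat.add_mul_div_right _ _ (by omega)]

lemma tri_eq (k : ℕ) : tri (k + 1) = Dim k := by
  unfold tri Dim
  rw [Nat.add_sub_cancel, mul_comm]

lemma tri_zero : tri 0 = 0 := rfl

lemma tri_mono {a b : ℕ} (h : a ≤ b) : tri a ≤ tri b := by
  induction b, h using Nat.le_induction with
  | base => exact le_rfl
  | succ b _ ih => rw [tri_succ]; omega

lemma tri_add_le {a b p : ℕ} (h : a < b) (hp : p ≤ a) : tri a + p ≤ tri b := by
  have := tri_mono (show a + 1 ≤ b from h)
  rw [tri_succ] at this; omega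

lemma canon_length (σ : ℕ → Bool) (k : ℕ) : (canon σ k).length = tri (k + 1) := by
  induction k with
  | zero => rfl
  | succ k ih =>
    rw [canon, tri_succ (k + 1)]
    split_ifs <;> simp [ih, descWord_length, ascWord_length]

lemma wordProd_canon (σ : ℕ → Bool) (k : ℕ) : ∀ c, wordProd (canon σ k) c =
    if 1 ≤ c ∧ c ≤ k + 1 then k + 2 - c else c := by
  induction k with
  | zero =>
    intro c
    simp [canon, wordProd]
    omega
  | succ k ih =>
    intro c
    rw [canon]
    by_cases hs : σ (k + 1) = true
    · rw [if_pos hs, wordProd_append, Equiv.Perm.mul_apply, ih, wordProd_descWord]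
      split_ifs <;> omega
    · rw [if_neg hs, wordProd_append, Equiv.Perm.mul_apply, wordProd_ascWord]
      by_cases h1 : c = k + 1 + 1
      · rw [if_pos h1, wordProd_shift _ 0, ih, if_neg (by omega), if_pos (by omega)]; omega
      · rw [if_neg h1]
        by_cases h2 : 1 ≤ c ∧ c < k + 1 + 1
        · rw [if_pos h2, wordProd_shift, ih, if_pos (by omega), if_pos (by omega)]; omega
        · rw [if_neg h2, if_neg (by omega)]
          rcases c with _ | c
          · exact wordProd_shift_zero _
          · rw [wordProd_shift, ih, if_neg (by omega)]

/-- the number of `A`s among the blocks `κ+1, …, k`. -/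
def off (σ : ℕ → Bool) (k κ : ℕ) : ℕ := ∑ i ∈ Finset.Ioc κ k, (if σ i then 0 else 1)

lemma off_self (σ : ℕ → Bool) (k : ℕ) : off σ k k = 0 := by simp [off]

lemma off_succ_top (σ : ℕ → Bool) (k κ : ℕ) (h : κ ≤ k) :
    off σ (k + 1) κ = off σ k κ + (if σ (k + 1) then 0 else 1) := by
  unfold off
  rw [Finset.sum_Ioc_succ_top h]

lemma off_split (σ : ℕ → Bool) (k κ κ' : ℕ) (h : κ ≤ κ') (h' : κ' ≤ k) :
    off σ k κ = off σ κ' κ + off σ k κ' := by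
  unfold off
  rw [Finset.sum_Ioc_consecutive _ h h']

lemma off_le (σ : ℕ → Bool) (k κ : ℕ) : off σ k κ ≤ k - κ := by
  unfold off
  calc _ ≤ ∑ i ∈ Finset.Ioc κ k, 1 := by
        apply Finset.sum_le_sum; intro i _; split_ifs <;> omega
    _ = k - κ := by simp

/-- the main wire of block `κ`. -/
def mn (σ : ℕ → Bool) (n κ : ℕ) : ℕ := if σ κ then off σ n κ + κ + 1 else off σ n κ + 1

/-- the other wire of the `p`-th node of block `κ`. -/
def sd (σ : ℕ → Bool) (n κ p : ℕ) : ℕ := if σ κ then off σ n κ + p else off σ n κ + κ + 2 - p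

/-- the letter of the `p`-th node of block `κ`. -/
def lt (σ : ℕ → Bool) (n κ p : ℕ) : ℕ := if σ κ then off σ n κ + κ + 1 - p else off σ n κ + p

lemma canon_data (σ : ℕ → Bool) (n : ℕ) : ∀ κ p, 1 ≤ p → p ≤ κ → κ ≤ n →
    letterAt (canon σ n) (tri κ + p) = lt σ n κ p ∧
    ((wireX (canon σ n) (tri κ + p) = mn σ n κ ∧ wireY (canon σ n) (tri κ + p) = sd σ n κ p) ∨
     (wireX (canon σ n) (tri κ + p) = sd σ n κ p ∧ wireY (canon σ n) (tri κ + p) = mn σ n κ)) := by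
  induction n with
  | zero => intro κ p h1 h2 h3; omega
  | succ n ih =>
    intro κ p h1 h2 h3
    rw [canon]
    by_cases hs : σ (n + 1) = true
    · simp only [hs, if_true]
      rcases Nat.lt_or_ge n κ with hκ | hκ
      · obtain rfl : κ = n + 1 := by omega
        rw [← canon_length σ n, letterAt_append_right _ _ _ h1, wireX_append_right _ _ _ h1,
          wireY_append_right _ _ _ h1, letterAt_descWord _ _ h1 h2, wireX_descWord _ _ h1 h2,
          wireY_descWord _ _ h1 h2, wordProd_canon, wordProd_canon]
        simp only [lt, mn, sd, off_self, hs, if_true]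
        refine ⟨by omega, Or.inr ⟨?_, ?_⟩⟩
        · rw [if_pos (by omega)]; omega
        · rw [if_neg (by omega)]; omega
      · have hl : tri κ + p ≤ (canon σ n).length := by
          rw [canon_length]; exact tri_add_le (by omega) h2
        rw [letterAt_append_left _ _ _ (by omega) hl, wireX_append_left _ _ _ (by omega) hl,
          wireY_append_left _ _ _ (by omega) hl]
        have := ih κ p h1 h2 hκ
        simpa only [lt, mn, sd, off_succ_top σ n κ hκ, hs, if_true, add_zero] using this
    · simp only [hs, if_false, Bool.false_eq_true]
      rcases Nat.lt_or_ge n κ with hκ | hκ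
      · obtain rfl : κ = n + 1 := by omega
        have hl : tri (n + 1) = ((canon σ n).map (· + 1)).length := by
          rw [List.length_map, canon_length]
        rw [hl, letterAt_append_right _ _ _ h1, wireX_append_right _ _ _ h1,
          wireY_append_right _ _ _ h1, letterAt_ascWord _ _ h1 h2, wireX_ascWord _ _ h1 h2,
          wireY_ascWord _ _ h1 h2, wordProd_shift _ 0, wordProd_shift, wordProd_canon,
          wordProd_canon]
        simp only [lt, mn, sd, off_self, hs, Bool.false_eq_true, if_false]
        refine ⟨by omega, Or.inl ⟨?_, ?_⟩⟩
        · rw [if_neg (by omega)]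
        · rw [if_pos (by omega)]; omega
      · have hl' : tri κ + p ≤ (canon σ n).length := by
          rw [canon_length]; exact tri_add_le (by omega) h2
        have hl : tri κ + p ≤ ((canon σ n).map (· + 1)).length := by
          rw [List.length_map]; exact hl'
        rw [letterAt_append_left _ _ _ (by omega) hl, wireX_append_left _ _ _ (by omega) hl,
          wireY_append_left _ _ _ (by omega) hl, letterAt_shift _ _ (by omega) hl',
          wireX_shift _ _ (by omega) hl', wireY_shift _ _ (by omega) hl']
        have := ih κ p h1 h2 hκ
        unfold lt mn sd at this ⊢
        rw [off_succ_top σ n κ hκ]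
        simp only [hs, if_false, Bool.false_eq_true]
        split_ifs at this ⊢ <;> omega


/-! ### Reducedness and reduction to canonical words -/

/-- no pair of wires crosses twice. -/
def PairRed (w : List ℕ) : Prop := ∀ i j, ValidNode w i → ValidNode w j → i ≠ j →
  ¬ ((wireX w i = wireX w j ∧ wireY w i = wireY w j) ∨
     (wireX w i = wireY w j ∧ wireY w i = wireX w j))

lemma pos_order (w : List ℕ) (a b : ℕ) (hab : a < b) (j : ℕ) (h1 : 1 ≤ j)
    (h2 : j ≤ w.length + 1)
    (hno : ∀ i, ValidNode w i → ¬ (wireX w i = a ∧ wireY w i = b)) :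
    (stateAbove w j).symm a < (stateAbove w j).symm b := by
  induction j, h1 using Nat.le_induction with
  | base => rw [stateAbove_one]; exact hab
  | succ j hj ih =>
    have ih := ih (by omega)
    have hn := hno j ⟨hj, by omega⟩
    rw [stateAbove_succ w j hj (by omega)]
    unfold wireX wireY at hn
    set S := stateAbove w j
    set l := letterAt w j
    have e : ∀ c, (S * sTrans l).symm c = sTrans l (S.symm c) := by
      intro c
      rw [Equiv.symm_apply_eq, Equiv.Perm.mul_apply]
      simp [sTrans]
    rw [e, e]
    have hn' : ¬ (S.symm a = l ∧ S.symm b = l + 1) := by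
      rintro ⟨h1, h2⟩
      exact hn ⟨by rw [← h1]; simp, by rw [← h2]; simp⟩
    rw [sTrans_apply, sTrans_apply]
    split_ifs <;> omega

lemma exists_cross (n : ℕ) (w : List ℕ) (h : wordProd w = longestPerm n) (a b : ℕ)
    (ha : 1 ≤ a) (hab : a < b) (hb : b ≤ n + 1) :
    ∃ i, ValidNode w i ∧ wireX w i = a ∧ wireY w i = b := by
  by_contra hcon
  push Not at hcon
  have := pos_order w a b hab (w.length + 1) (by omega) le_rfl
    (fun i hi hh => hcon i hi hh.1 hh.2)
  rw [stateAbove_last, h] at this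
  have e : ∀ c, (longestPerm n).symm c = if 1 ≤ c ∧ c ≤ n + 1 then n + 2 - c else c := by
    intro c; rfl
  rw [e, e, if_pos (by omega), if_pos (by omega)] at this
  omega

lemma IsReduced.pairRed {n : ℕ} {w : List ℕ} (h : IsReduced n w) : PairRed w := by
  obtain ⟨hlen, -, hw⟩ := h
  set S : Finset (Σ _ : ℕ, ℕ) := (Finset.range (n + 1)).sigma (fun b => Finset.range b) with hS
  have hSc : S.card = w.length := by
    rw [hS, Finset.card_sigma]
    simp only [Finset.card_range]
    rw [Finset.sum_range_id, hlen, Nat.add_sub_cancel, mul_comm]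
  let g : ℕ → (Σ _ : ℕ, ℕ) := fun j => ⟨wireY w j - 1, wireX w j - 1⟩
  set I := Finset.Icc 1 w.length
  have hsub : S ⊆ I.image g := by
    rintro ⟨b, a⟩ hba
    simp only [hS, Finset.mem_sigma, Finset.mem_range] at hba
    obtain ⟨i, hi, hx, hy⟩ := exists_cross n w hw (a + 1) (b + 1) (by omega) (by omega) (by omega)
    refine Finset.mem_image.2 ⟨i, Finset.mem_Icc.2 hi, ?_⟩
    simp [g, hx, hy]
  have hIc : I.card = w.length := by simp [I]
  have hle : (I.image g).card ≤ I.card := Finset.card_image_le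
  have heq : S = I.image g := Finset.eq_of_subset_of_card_le hsub (by omega)
  have hinj : Set.InjOn g I := Finset.card_image_iff.1 (by rw [← heq]; omega)
  have hlt : ∀ i, ValidNode w i → wireX w i - 1 < wireY w i - 1 := by
    intro i hi
    have : g i ∈ S := by rw [heq]; exact Finset.mem_image_of_mem _ (Finset.mem_Icc.2 hi)
    simp only [hS, g, Finset.mem_sigma, Finset.mem_range] at this
    exact this.2
  intro i j hi hj hne hh
  rcases hh with ⟨h1, h2⟩ | ⟨h1, h2⟩
  · apply hne
    apply hinj (Finset.mem_coe.2 (Finset.mem_Icc.2 hi)) (Finset.mem_coe.2 (Finset.mem_Icc.2 hj))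
    simp [g, h1, h2]
  · have := hlt i hi
    have := hlt j hj
    omega

lemma PairRed.sim {w w' : List ℕ} {f : Equiv.Perm ℕ} (h : PairRed w) (hf : SimVia w w' f) :
    PairRed w' := by
  intro i j hi hj hne
  have := h (f i) (f j) ((hf.valid i).1 hi) ((hf.valid j).1 hj) (fun e => hne (f.injective e))
  rwa [hf.wx i hi, hf.wx j hj, hf.wy i hi, hf.wy j hj] at this

lemma PairRed.initial_part {u v : List ℕ} (h : PairRed (u ++ v)) : PairRed u := by
  intro i j hi hj hne
  have := h i j ⟨hi.1, by rw [List.length_append]; have := hi.2; omega⟩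
    ⟨hj.1, by rw [List.length_append]; have := hj.2; omega⟩ hne
  rwa [wireX_append_left _ _ _ hi.1 hi.2, wireX_append_left _ _ _ hj.1 hj.2,
    wireY_append_left _ _ _ hi.1 hi.2, wireY_append_left _ _ _ hj.1 hj.2] at this

lemma PairRed.unshift {u : List ℕ} (h : PairRed (u.map (· + 1))) : PairRed u := by
  intro i j hi hj hne
  have := h i j ⟨hi.1, by rw [List.length_map]; exact hi.2⟩
    ⟨hj.1, by rw [List.length_map]; exact hj.2⟩ hne
  rw [wireX_shift _ _ hi.1 hi.2, wireX_shift _ _ hj.1 hj.2,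
    wireY_shift _ _ hi.1 hi.2, wireY_shift _ _ hj.1 hj.2] at this
  omega

lemma wordProd_fix (u : List ℕ) (a b c : ℕ) (hu : ∀ x ∈ u, a ≤ x ∧ x ≤ b)
    (hc : c < a ∨ b + 1 < c) : wordProd u c = c := by
  induction u with
  | nil => simp [wordProd]
  | cons x u ih =>
    have h2 : wordProd (x :: u) = sTrans x * wordProd u := by simp [wordProd]
    have hx := hu x (by simp)
    rw [h2, Equiv.Perm.mul_apply, ih (fun y hy => hu y (by simp [hy])), sTrans_apply]
    split_ifs <;> omega

lemma wordProd_pre (u : List ℕ) (a b c : ℕ) (hu : ∀ x ∈ u, a ≤ x ∧ x ≤ b)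
    (hc : a ≤ c ∧ c ≤ b + 1) : ∃ d, a ≤ d ∧ d ≤ b + 1 ∧ wordProd u d = c := by
  obtain ⟨d, hd⟩ := (wordProd u).surjective c
  by_cases h : d < a ∨ b + 1 < d
  · have := wordProd_fix u a b d hu h
    omega
  · exact ⟨d, by omega, by omega, hd⟩

lemma last_occ {u : List ℕ} {x : ℕ} (h : x ∈ u) : ∃ u1 u2, u = u1 ++ x :: u2 ∧ x ∉ u2 := by
  obtain ⟨as, bs, h1, h2⟩ := List.eq_append_cons_of_mem (List.mem_reverse.2 h)
  refine ⟨bs.reverse, as.reverse, ?_, by simpa using h2⟩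
  have := congrArg List.reverse h1
  simpa using this

lemma wordProd_mid (u1 u2 : List ℕ) (x c : ℕ) :
    wordProd (u1 ++ x :: u2) c = wordProd u1 (sTrans x (wordProd u2 c)) := by
  simp [wordProd]

lemma mid_wires (u1 u2 v : List ℕ) (x : ℕ) :
    wireX ((u1 ++ x :: u2) ++ v) (u1.length + 1) = wordProd u1 x ∧
    wireY ((u1 ++ x :: u2) ++ v) (u1.length + 1) = wordProd u1 (x + 1) := by
  rw [List.append_assoc, wireX_append_right _ _ _ le_rfl, wireY_append_right _ _ _ le_rfl]
  simp [wireX, wireY, stateAbove, letterAt, wordProd]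

lemma noTop (n : ℕ) (u : List ℕ) (hu : ∀ x ∈ u, 1 ≤ x ∧ x ≤ n)
    (h : PairRed (u ++ descWord n)) : n ∉ u := by
  intro hmem
  have hn := (hu n hmem).1
  obtain ⟨u1, u2, rfl, hn2⟩ := last_occ hmem
  have hu2 : ∀ x ∈ u2, 1 ≤ x ∧ x ≤ n - 1 := by
    intro x hx
    have h1 := hu x (by simp [hx])
    have h2 : x ≠ n := fun e => hn2 (e ▸ hx)
    omega
  obtain ⟨c, hc1, hc2, hc⟩ := wordProd_pre u2 1 (n - 1) n hu2 (by omega)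
  have hfix := wordProd_fix u2 1 (n - 1) (n + 1) hu2 (by omega)
  obtain ⟨m1, m2⟩ := mid_wires u1 u2 (descWord n) n
  refine h (u1.length + 1) ((u1 ++ n :: u2).length + (n + 1 - c)) ⟨by omega, ?_⟩ ⟨by omega, ?_⟩
    ?_ (Or.inr ⟨?_, ?_⟩)
  · simp [descWord_length]
  · simp [descWord_length]; omega
  · simp; omega
  · rw [m1, wireY_append_right _ _ _ (by omega), wireY_descWord _ _ (by omega) (by omega),
      wordProd_mid, hfix, sTrans_apply]
    simp
  · rw [m2, wireX_append_right _ _ _ (by omega), wireX_descWord _ _ (by omega) (by omega),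
      wordProd_mid, show n + 1 - (n + 1 - c) = c by omega, hc, sTrans_apply]
    simp

lemma noBot (n : ℕ) (u : List ℕ) (hu : ∀ x ∈ u, 1 ≤ x ∧ x ≤ n)
    (h : PairRed (u ++ ascWord n)) : 1 ∉ u := by
  intro hmem
  have hn := (hu 1 hmem).2
  obtain ⟨u1, u2, rfl, hn2⟩ := last_occ hmem
  have hu2 : ∀ x ∈ u2, 2 ≤ x ∧ x ≤ n := by
    intro x hx
    have h1 := hu x (by simp [hx])
    have h2 : x ≠ 1 := fun e => hn2 (e ▸ hx)
    omega
  obtain ⟨c, hc1, hc2, hc⟩ := wordProd_pre u2 2 n 2 hu2 (by omega)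
  have hfix := wordProd_fix u2 2 n 1 hu2 (by omega)
  obtain ⟨m1, m2⟩ := mid_wires u1 u2 (ascWord n) 1
  refine h (u1.length + 1) ((u1 ++ 1 :: u2).length + (c - 1)) ⟨by omega, ?_⟩ ⟨by omega, ?_⟩
    ?_ (Or.inr ⟨?_, ?_⟩)
  · simp [ascWord_length]
  · simp [ascWord_length]; omega
  · simp; omega
  · rw [m1, wireY_append_right _ _ _ (by omega), wireY_ascWord _ _ (by omega) (by omega),
      wordProd_mid, show c - 1 + 1 = c by omega, hc, sTrans_apply]
    simp
  · rw [m2, wireX_append_right _ _ _ (by omega), wireX_ascWord _ _ (by omega) (by omega),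
      wordProd_mid, hfix, sTrans_apply]
    simp

lemma TwoMoveEquiv.symm' {w w' : List ℕ} (h : TwoMoveEquiv w w') : TwoMoveEquiv w' w := by
  induction h with
  | refl => exact Relation.ReflTransGen.refl
  | tail _ hs ih =>
    obtain ⟨u, v, a, b, hab, rfl, rfl⟩ := hs
    exact Relation.ReflTransGen.head ⟨u, v, b, a, by omega, rfl, rfl⟩ ih

lemma TwoMoveEquiv.perm {w w' : List ℕ} (h : TwoMoveEquiv w w') : w.Perm w' := by
  induction h with
  | refl => exact List.Perm.refl _
  | tail _ hs ih =>
    obtain ⟨u, v, a, b, hab, rfl, rfl⟩ := hs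
    exact ih.trans (List.Perm.append_left _ (List.Perm.swap _ _ _))

lemma TwoMoveEquiv.append {w w' : List ℕ} (h : TwoMoveEquiv w w') (z : List ℕ) :
    TwoMoveEquiv (w ++ z) (w' ++ z) := by
  induction h with
  | refl => exact Relation.ReflTransGen.refl
  | tail _ hs ih =>
    obtain ⟨u, v, a, b, hab, rfl, rfl⟩ := hs
    exact Relation.ReflTransGen.tail ih ⟨u, v ++ z, a, b, hab, by simp, by simp⟩

lemma TwoMoveEquiv.shift {w w' : List ℕ} (h : TwoMoveEquiv w w') :
    TwoMoveEquiv (w.map (· + 1)) (w'.map (· + 1)) := by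
  induction h with
  | refl => exact Relation.ReflTransGen.refl
  | tail _ hs ih =>
    obtain ⟨u, v, a, b, hab, rfl, rfl⟩ := hs
    exact Relation.ReflTransGen.tail ih ⟨u.map (· + 1), v.map (· + 1), a + 1, b + 1, by omega, by simp, by simp⟩

/-- projection onto the letters `b, b + 1`. -/
def proj (b : ℕ) (w : List ℕ) : List ℕ := w.filter (fun x => decide (x = b ∨ x = b + 1))

lemma proj_append (b : ℕ) (u v : List ℕ) : proj b (u ++ v) = proj b u ++ proj b v := by
  simp [proj]

lemma TwoMoveEquiv.proj_eq {w w' : List ℕ} (h : TwoMoveEquiv w w') (b : ℕ) :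
    proj b w = proj b w' := by
  induction h with
  | refl => rfl
  | tail _ hs ih =>
    obtain ⟨u, v, x, y, hab, rfl, rfl⟩ := hs
    rw [ih, proj_append, proj_append]
    congr 1
    unfold proj
    simp only [List.filter_cons, decide_eq_true_eq]
    split_ifs <;> first | rfl | omega

lemma ascWord_succ (m : ℕ) : ascWord (m + 1) = ascWord m ++ [m + 1] := by
  simp [ascWord, List.range_succ]

lemma proj_ascWord (b m : ℕ) (hb : 1 ≤ b) : proj b (ascWord m) =
    if m < b then [] else if m = b then [b] else [b, b + 1] := by
  induction m with
  | zero => simp [proj, ascWord]; omega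
  | succ m ih =>
    rw [ascWord_succ, proj_append, ih]
    unfold proj
    simp only [List.filter_cons, decide_eq_true_eq, List.filter_nil]
    split_ifs <;> first | omega | (simp; try omega)

lemma proj_asc (b m : ℕ) (hb : 1 ≤ b) (hm : b < m) : proj b (ascWord m) = [b, b + 1] := by
  rw [proj_ascWord _ _ hb, if_neg (by omega), if_neg (by omega)]

lemma proj_desc (b m : ℕ) (hb : 1 ≤ b) (hm : b < m) : proj b (descWord m) = [b + 1, b] := by
  have := proj_asc b m hb hm
  unfold proj at this ⊢
  unfold descWord
  rw [List.filter_reverse, this]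
  rfl

lemma tail_nil {L L' V : List ℕ} {x y : ℕ} (hxy : x ≠ y) (hV : ∀ z ∈ V, z = y)
    (h : L ++ [x, y] = L' ++ [x, y] ++ V) : V = [] := by
  rcases List.eq_nil_or_concat V with rfl | ⟨V', z, rfl⟩
  · rfl
  · exfalso
    have h1 := congrArg List.reverse h
    simp only [List.reverse_append, List.concat_eq_append] at h1
    rcases List.eq_nil_or_concat V' with rfl | ⟨V'', z', rfl⟩
    · simp at h1
      exact hxy h1.2.1
    · simp at h1
      have : z' = y := hV z' (by simp)
      exact hxy (h1.2.1.trans this)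

lemma mem_proj {b x : ℕ} {w : List ℕ} : x ∈ proj b w ↔ x ∈ w ∧ (x = b ∨ x = b + 1) := by
  simp [proj]

lemma nodup_asc (n : ℕ) : (ascWord n).Nodup := by
  unfold ascWord
  exact List.Nodup.map (fun a b h => by simpa using h) List.nodup_range

lemma mem_asc (n x : ℕ) : x ∈ ascWord n ↔ 1 ≤ x ∧ x ≤ n := by
  simp only [ascWord, List.mem_map, List.mem_range]
  constructor
  · rintro ⟨a, h1, rfl⟩; omega
  · intro h; exact ⟨x - 1, by omega, by omega⟩

lemma vnil_D (n : ℕ) (hn : 1 ≤ n) (u u' v : List ℕ)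
    (h : TwoMoveEquiv (u ++ descWord n) (u' ++ descWord n ++ v)) (hu : n ∉ u)
    (hv : ∀ x ∈ v, 1 ≤ x ∧ x ≤ n) : v = [] := by
  have hc : (descWord n).count n = 1 :=
    List.count_eq_one_of_mem (by rw [descWord]; exact List.nodup_reverse.2 (nodup_asc n))
      (by rw [descWord, List.mem_reverse, mem_asc]; omega)
  have hcount := h.perm.count_eq n
  simp only [List.count_append, hc, List.count_eq_zero_of_not_mem hu] at hcount
  have hnv : n ∉ v := List.count_eq_zero.1 (by omega)
  have hall : ∀ d, d < n → (n - d) ∉ v := by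
    intro d
    induction d with
    | zero => intro _; exact hnv
    | succ d ih =>
      intro hd hmem
      have ih := ih (by omega)
      have hp := h.proj_eq (n - (d + 1))
      rw [proj_append, proj_append, proj_append, proj_desc _ _ (by omega) (by omega)] at hp
      have := tail_nil (by omega) (fun z hz => ?_) hp
      · have hm : n - (d + 1) ∈ proj (n - (d + 1)) v := mem_proj.2 ⟨hmem, Or.inl rfl⟩
        rw [this] at hm
        simp at hm
      · obtain ⟨h1, h2 | h2⟩ := mem_proj.1 hz
        · exact h2
        · exfalso; apply ih; convert h1 using 1; omega
  rw [List.eq_nil_iff_forall_not_mem]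
  intro x hx
  have := hv x hx
  exact hall (n - x) (by omega) (by convert hx using 1; omega)

lemma vnil_A (n : ℕ) (hn : 1 ≤ n) (u u' v : List ℕ)
    (h : TwoMoveEquiv (u ++ ascWord n) (u' ++ ascWord n ++ v)) (hu : 1 ∉ u)
    (hv : ∀ x ∈ v, 1 ≤ x ∧ x ≤ n) : v = [] := by
  have hc : (ascWord n).count 1 = 1 :=
    List.count_eq_one_of_mem (nodup_asc n) (by rw [mem_asc]; omega)
  have hcount := h.perm.count_eq 1
  simp only [List.count_append, hc, List.count_eq_zero_of_not_mem hu] at hcount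
  have hnv : 1 ∉ v := List.count_eq_zero.1 (by omega)
  have hall : ∀ d, d < n → (d + 1) ∉ v := by
    intro d
    induction d with
    | zero => intro _; exact hnv
    | succ d ih =>
      intro hd hmem
      have ih := ih (by omega)
      have hp := h.proj_eq (d + 1)
      rw [proj_append, proj_append, proj_append, proj_asc _ _ (by omega) (by omega)] at hp
      have := tail_nil (by omega) (fun z hz => ?_) hp
      · have hm : d + 1 + 1 ∈ proj (d + 1) v := mem_proj.2 ⟨hmem, Or.inr rfl⟩
        rw [this] at hm
        simp at hm
      · obtain ⟨h1, h2 | h2⟩ := mem_proj.1 hz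
        · exfalso; apply ih; rw [← h2]; exact h1
        · exact h2
  rw [List.eq_nil_iff_forall_not_mem]
  intro x hx
  have := hv x hx
  exact hall (x - 1) (by omega) (by convert hx using 1; omega)

lemma PairRed.equiv {w w' : List ℕ} (h : PairRed w) (he : TwoMoveEquiv w w') : PairRed w' := by
  obtain ⟨f, hf⟩ := SimVia.of_equiv he
  exact h.sim hf

lemma step_D (n : ℕ) (hn : 1 ≤ n) (w w' : List ℕ) (hw : ∀ x ∈ w, 1 ≤ x ∧ x ≤ n) (hr : PairRed w)
    (hc : IsContractionD n w w') (hi : indD n w = 0) :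
    TwoMoveEquiv w (w' ++ descWord n) ∧ PairRed w' ∧ ∀ x ∈ w', 1 ≤ x ∧ x ≤ n - 1 := by
  obtain ⟨u', v', he', rfl⟩ := hc
  rcases Nat.sInf_eq_zero.1 hi with h0 | h0
  · obtain ⟨u, v, hv, he⟩ := h0
    obtain rfl := List.length_eq_zero_iff.1 hv
    rw [List.append_nil] at he
    have hu := noTop n u (fun x hx => hw x (he.perm.mem_iff.2 (by simp [hx]))) (hr.equiv he)
    have hv' : v' = [] := vnil_D n hn u u' v' (he.symm'.trans he') hu
      (fun x hx => hw x (he'.perm.mem_iff.2 (by simp [hx])))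
    subst hv'
    rw [List.append_nil] at he'
    simp only [List.map_nil, List.append_nil]
    have hr' := hr.equiv he'
    have hw' : ∀ x ∈ u', 1 ≤ x ∧ x ≤ n := fun x hx => hw x (he'.perm.mem_iff.2 (by simp [hx]))
    have hu' := noTop n u' hw' hr'
    refine ⟨he', hr'.initial_part, fun x hx => ?_⟩
    have h1 := hw' x hx
    have h2 : x ≠ n := fun e => hu' (e ▸ hx)
    omega
  · exfalso
    have : v'.length ∈ (∅ : Set ℕ) := by
      rw [← h0]; exact ⟨u', v', rfl, he'⟩
    exact this

lemma step_A (n : ℕ) (hn : 1 ≤ n) (w w' : List ℕ) (hw : ∀ x ∈ w, 1 ≤ x ∧ x ≤ n) (hr : PairRed w)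
    (hc : IsContractionA n w w') (hi : indA n w = 0) :
    TwoMoveEquiv w (w'.map (· + 1) ++ ascWord n) ∧ PairRed w' ∧ ∀ x ∈ w', 1 ≤ x ∧ x ≤ n - 1 := by
  obtain ⟨u', v', he', rfl⟩ := hc
  rcases Nat.sInf_eq_zero.1 hi with h0 | h0
  · obtain ⟨u, v, hv, he⟩ := h0
    obtain rfl := List.length_eq_zero_iff.1 hv
    rw [List.append_nil] at he
    have hu := noBot n u (fun x hx => hw x (he.perm.mem_iff.2 (by simp [hx]))) (hr.equiv he)
    have hv' : v' = [] := vnil_A n hn u u' v' (he.symm'.trans he') hu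
      (fun x hx => hw x (he'.perm.mem_iff.2 (by simp [hx])))
    subst hv'
    rw [List.append_nil] at he'
    simp only [List.append_nil]
    have hr' := hr.equiv he'
    have hw' : ∀ x ∈ u', 1 ≤ x ∧ x ≤ n := fun x hx => hw x (he'.perm.mem_iff.2 (by simp [hx]))
    have hu' := noBot n u' hw' hr'
    have h2 : ∀ x ∈ u', 2 ≤ x := by
      intro x hx
      have h1 := hw' x hx
      have h2 : x ≠ 1 := fun e => hu' (e ▸ hx)
      omega
    have hmap : (u'.map (· - 1)).map (· + 1) = u' := by
      rw [List.map_map]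
      conv_rhs => rw [← List.map_id u']
      apply List.map_congr_left
      intro x hx
      have := h2 x hx
      simp only [Function.comp_apply, id]; omega
    rw [hmap]
    refine ⟨he', PairRed.unshift (by rw [hmap]; exact hr'.initial_part), fun x hx => ?_⟩
    obtain ⟨y, hy, rfl⟩ := List.mem_map.1 hx
    have h1 := hw' y hy
    have h2 := h2 y hy
    omega
  · exfalso
    have : v'.length ∈ (∅ : Set ℕ) := by
      rw [← h0]; exact ⟨u', v', rfl, he'⟩
    exact this

lemma to_canon (σ : ℕ → Bool) (c : ℕ → List ℕ) (n : ℕ)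
    (hw : ∀ x ∈ c n, 1 ≤ x ∧ x ≤ n) (hr : PairRed (c n))
    (h : ∀ k, 1 ≤ k → k ≤ n →
      (if σ k then IsContractionD k (c k) (c (k - 1)) ∧ indD k (c k) = 0
       else IsContractionA k (c k) (c (k - 1)) ∧ indA k (c k) = 0)) :
    TwoMoveEquiv (c n) (canon σ n) := by
  induction n with
  | zero =>
    have : c 0 = [] := by
      rw [List.eq_nil_iff_forall_not_mem]
      intro x hx
      have := hw x hx
      omega
    rw [this]
    exact Relation.ReflTransGen.refl
  | succ n ih =>
    have hk := h (n + 1) (by omega) le_rfl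
    rw [Nat.add_sub_cancel] at hk
    rw [canon]
    split_ifs at hk ⊢
    · obtain ⟨h1, h2, h3⟩ := step_D _ (by omega) _ _ hw hr hk.1 hk.2
      exact h1.trans ((ih h3 h2 (fun k a b => h k a (by omega))).append _)
    · obtain ⟨h1, h2, h3⟩ := step_A _ (by omega) _ _ hw hr hk.1 hk.2
      exact h1.trans ((ih h3 h2 (fun k a b => h k a (by omega))).shift.append _)

lemma exists_sim (n : ℕ) (w : List ℕ) (hi : IsReduced n w) (hs : SimplicialWord n w) :
    ∃ σ f, SimVia w (canon σ n) f := by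
  obtain ⟨σ, c, rfl, h⟩ := hs
  exact ⟨σ, SimVia.of_equiv (to_canon σ c n hi.2.1 hi.pairRed h)⟩


/-! ### Block structure -/

/-- the word `w` has the wiring diagram of a canonical word, with nodes `nd κ p`. -/
structure Blk (σ : ℕ → Bool) (n : ℕ) (w : List ℕ) (nd : ℕ → ℕ → ℕ) : Prop where
  valid : ∀ κ p, 1 ≤ p → p ≤ κ → κ ≤ n → ValidNode w (nd κ p)
  surj : ∀ q, ValidNode w q → ∃ κ p, 1 ≤ p ∧ p ≤ κ ∧ κ ≤ n ∧ q = nd κ p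
  inj : ∀ κ p κ' p', 1 ≤ p → p ≤ κ → κ ≤ n → 1 ≤ p' → p' ≤ κ' → κ' ≤ n →
    nd κ p = nd κ' p' → κ = κ' ∧ p = p'
  on : ∀ κ p, 1 ≤ p → p ≤ κ → κ ≤ n → ∀ r,
    NodeOnWire w (nd κ p) r ↔ r = mn σ n κ ∨ r = sd σ n κ p
  oth_mn : ∀ κ p, 1 ≤ p → p ≤ κ → κ ≤ n → otherWire w (nd κ p) (mn σ n κ) = sd σ n κ p
  oth_sd : ∀ κ p, 1 ≤ p → p ≤ κ → κ ≤ n → otherWire w (nd κ p) (sd σ n κ p) = mn σ n κ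
  ord : ∀ κ p κ' p', 1 ≤ p → p ≤ κ → κ ≤ n → 1 ≤ p' → p' ≤ κ' → κ' ≤ n → ∀ r,
    NodeOnWire w (nd κ p) r → NodeOnWire w (nd κ' p') r →
    (nd κ p < nd κ' p' ↔ κ < κ' ∨ (κ = κ' ∧ p < p'))

lemma mn_ne_sd (σ : ℕ → Bool) (n κ p : ℕ) (h1 : 1 ≤ p) (h2 : p ≤ κ) :
    mn σ n κ ≠ sd σ n κ p := by
  unfold mn sd; split_ifs <;> omega

lemma tri_inj {κ p κ' p' : ℕ} (h1 : 1 ≤ p) (h2 : p ≤ κ) (h1' : 1 ≤ p') (h2' : p' ≤ κ')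
    (h : tri κ + p = tri κ' + p') : κ = κ' ∧ p = p' := by
  rcases lt_trichotomy κ κ' with hl | rfl | hl
  · have := tri_add_le hl h2; omega
  · exact ⟨rfl, by omega⟩
  · have := tri_add_le hl h2'; omega

lemma tri_lt {κ p κ' p' : ℕ} (h1 : 1 ≤ p) (h2 : p ≤ κ) (h1' : 1 ≤ p') (h2' : p' ≤ κ') :
    tri κ + p < tri κ' + p' ↔ κ < κ' ∨ (κ = κ' ∧ p < p') := by
  rcases lt_trichotomy κ κ' with hl | rfl | hl
  · have := tri_add_le hl h2; omega
  · omega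
  · have := tri_add_le hl h2'; omega

lemma tri_surj (n q : ℕ) (h1 : 1 ≤ q) (h2 : q ≤ tri (n + 1)) :
    ∃ κ p, 1 ≤ p ∧ p ≤ κ ∧ κ ≤ n ∧ q = tri κ + p := by
  induction n with
  | zero => simp [tri] at h2; omega
  | succ n ih =>
    by_cases h : q ≤ tri (n + 1)
    · obtain ⟨κ, p, a, b, c, d⟩ := ih h
      exact ⟨κ, p, a, b, by omega, d⟩
    · rw [tri_succ] at h2
      exact ⟨n + 1, q - tri (n + 1), by omega, by omega, le_rfl, by omega⟩

lemma canon_valid (σ : ℕ → Bool) (n κ p : ℕ) (h1 : 1 ≤ p) (h2 : p ≤ κ) (h3 : κ ≤ n) :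
    ValidNode (canon σ n) (tri κ + p) :=
  ⟨by omega, by rw [canon_length]; exact tri_add_le (by omega) h2⟩

lemma Blk.of_sim {σ : ℕ → Bool} {n : ℕ} {w : List ℕ} {f : Equiv.Perm ℕ}
    (h : SimVia w (canon σ n) f) : Blk σ n w (fun κ p => f (tri κ + p)) := by
  have hon : ∀ κ p, 1 ≤ p → p ≤ κ → κ ≤ n → ∀ r,
      NodeOnWire w (f (tri κ + p)) r ↔ r = mn σ n κ ∨ r = sd σ n κ p := by
    intro κ p h1 h2 h3 r
    have hv := canon_valid σ n κ p h1 h2 h3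
    unfold NodeOnWire
    rw [h.wx _ hv, h.wy _ hv]
    have := (canon_data σ n κ p h1 h2 h3).2
    omega
  have hlt : ∀ κ p κ' p', 1 ≤ p → p ≤ κ → κ ≤ n → 1 ≤ p' → p' ≤ κ' → κ' ≤ n → ∀ r,
    NodeOnWire w (f (tri κ + p)) r → NodeOnWire w (f (tri κ' + p')) r →
    tri κ + p < tri κ' + p' → f (tri κ + p) < f (tri κ' + p') := by
    intro κ p κ' p' h1 h2 h3 h1' h2' h3' r hr hr' hl
    have hv := canon_valid σ n κ p h1 h2 h3
    have hv' := canon_valid σ n κ' p' h1' h2' h3'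
    refine h.ord _ _ hv hv' hl (Or.inr ⟨r, ?_, ?_⟩)
    · unfold NodeOnWire at hr ⊢
      rwa [h.wx _ hv, h.wy _ hv] at hr
    · unfold NodeOnWire at hr' ⊢
      rwa [h.wx _ hv', h.wy _ hv'] at hr'
  constructor
  · intro κ p h1 h2 h3
    exact (h.valid _).1 (canon_valid σ n κ p h1 h2 h3)
  · intro q hq
    have : ValidNode (canon σ n) (f.symm q) := (h.valid _).2 (by simpa using hq)
    obtain ⟨κ, p, a, b, c, d⟩ := tri_surj n (f.symm q) this.1 (by
      have := this.2; rwa [canon_length] at this)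
    exact ⟨κ, p, a, b, c, by rw [← d]; simp⟩
  · intro κ p κ' p' h1 h2 h3 h1' h2' h3' he
    exact tri_inj h1 h2 h1' h2' (f.injective he)
  · exact hon
  · intro κ p h1 h2 h3
    have hv := canon_valid σ n κ p h1 h2 h3
    have hne := mn_ne_sd σ n κ p h1 h2
    unfold otherWire
    rw [h.wx _ hv, h.wy _ hv]
    have := (canon_data σ n κ p h1 h2 h3).2
    split_ifs <;> omega
  · intro κ p h1 h2 h3
    have hv := canon_valid σ n κ p h1 h2 h3
    have hne := mn_ne_sd σ n κ p h1 h2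
    unfold otherWire
    rw [h.wx _ hv, h.wy _ hv]
    have := (canon_data σ n κ p h1 h2 h3).2
    split_ifs <;> omega
  · intro κ p κ' p' h1 h2 h3 h1' h2' h3' r hr hr'
    rw [← tri_lt h1 h2 h1' h2']
    constructor
    · intro hl
      by_contra hcon
      rcases (not_lt.1 hcon).lt_or_eq with hc | hc
      · have := hlt κ' p' κ p h1' h2' h3' h1 h2 h3 r hr' hr hc
        omega
      · rw [hc] at hl; omega
    · exact hlt κ p κ' p' h1 h2 h3 h1' h2' h3' r hr hr'

lemma off_nest (σ : ℕ → Bool) (n κ κ' : ℕ) (h : κ < κ') (h' : κ' ≤ n) :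
    (σ κ' = true ∧ off σ n κ' ≤ off σ n κ ∧ off σ n κ + κ + 1 ≤ off σ n κ' + κ') ∨
    (σ κ' = false ∧ off σ n κ' + 1 ≤ off σ n κ ∧ off σ n κ + κ ≤ off σ n κ' + κ') := by
  have h1 := off_split σ n κ κ' h.le h'
  obtain ⟨m, rfl⟩ : ∃ m, κ' = m + 1 := ⟨κ' - 1, by omega⟩
  have h2 := off_succ_top σ m κ (by omega)
  have h3 := off_le σ m κ
  cases hs : σ (m + 1)
  · right
    simp only [hs, Bool.false_eq_true, if_false] at h2
    refine ⟨rfl, ?_, ?_⟩ <;> omega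
  · left
    simp only [hs, if_true] at h2
    refine ⟨rfl, ?_, ?_⟩ <;> omega

lemma node_val (σ : ℕ → Bool) (n κ : ℕ) :
    (σ κ = true ∧ mn σ n κ = off σ n κ + κ + 1 ∧ ∀ p, sd σ n κ p = off σ n κ + p) ∨
    (σ κ = false ∧ mn σ n κ = off σ n κ + 1 ∧ ∀ p, sd σ n κ p = off σ n κ + κ + 2 - p) := by
  cases hs : σ κ
  · right; simp [mn, sd, hs]
  · left; simp [mn, sd, hs]

namespace Blk

variable {σ : ℕ → Bool} {n : ℕ} {w : List ℕ} {nd : ℕ → ℕ → ℕ}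

lemma on_mem (h : Blk σ n w nd) {κ p r : ℕ} (h1 : 1 ≤ p) (h2 : p ≤ κ) (h3 : κ ≤ n)
    (hr : NodeOnWire w (nd κ p) r) : off σ n κ + 1 ≤ r ∧ r ≤ off σ n κ + κ + 1 := by
  have h4 := (h.on κ p h1 h2 h3 r).1 hr
  rcases node_val σ n κ with ⟨-, h5, h6⟩ | ⟨-, h5, h6⟩ <;> rw [h5, h6] at h4 <;> omega

lemma on_mn (h : Blk σ n w nd) {κ p : ℕ} (h1 : 1 ≤ p) (h2 : p ≤ κ) (h3 : κ ≤ n) :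
    NodeOnWire w (nd κ p) (mn σ n κ) := (h.on κ p h1 h2 h3 _).2 (Or.inl rfl)

lemma on_sd (h : Blk σ n w nd) {κ p : ℕ} (h1 : 1 ≤ p) (h2 : p ≤ κ) (h3 : κ ≤ n) :
    NodeOnWire w (nd κ p) (sd σ n κ p) := (h.on κ p h1 h2 h3 _).2 (Or.inr rfl)

/-- nodes below a settled node. -/
lemma below (h : Blk σ n w nd) {κ p r m : ℕ} (h1 : 1 ≤ p) (h2 : p ≤ κ) (h3 : κ ≤ n)
    (hr : NodeOnWire w (nd κ p) r) (hs : r = sd σ n κ p ∨ p = κ)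
    (hv : ValidNode w m) (hm : NodeOnWire w m r) (hlt : nd κ p < m) :
    ∃ κ' p', κ < κ' ∧ 1 ≤ p' ∧ p' ≤ κ' ∧ κ' ≤ n ∧ m = nd κ' p' ∧ r = sd σ n κ' p' := by
  obtain ⟨κ', p', a, b, c, rfl⟩ := h.surj m hv
  have ho := (h.ord κ p κ' p' h1 h2 h3 a b c r hr hm).1 hlt
  have hI := h.on_mem h1 h2 h3 hr
  have hm' := (h.on _ _ a b c r).1 hm
  have hκ : κ < κ' := by
    rcases ho with ho | ⟨rfl, ho⟩
    · exact ho
    · exfalso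
      rcases node_val σ n κ with ⟨-, h5, h6⟩ | ⟨-, h5, h6⟩ <;> simp only [h5, h6] at hm' hs <;>
        omega
  refine ⟨κ', p', hκ, a, b, c, rfl, ?_⟩
  rcases hm' with hm' | hm'
  · exfalso
    rcases off_nest σ n κ κ' hκ c with hh | hh <;>
    rcases node_val σ n κ' with ⟨h4, h5, h6⟩ | ⟨h4, h5, h6⟩ <;> simp_all <;> omega
  · exact hm'

lemma fwdD (h : Blk σ n w nd) {κ p k m : ℕ} {ms : List ℕ} (h1 : 1 ≤ p) (h2 : p < κ) (h3 : κ ≤ n)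
    (hs : σ κ = true) (hk : k < sd σ n κ (p + 1))
    (ht : TravelOK w k (mn σ n κ) (nd κ p) (m :: ms)) :
    m = nd κ (p + 1) ∧ TravelOK w k (sd σ n κ (p + 1)) (nd κ (p + 1)) ms := by
  obtain ⟨hv, hm, hlt, hseg, ht⟩ := ht
  have hnv : mn σ n κ = off σ n κ + κ + 1 ∧ ∀ p, sd σ n κ p = off σ n κ + p := by
    simp [mn, sd, hs]
  have hlt' : nd κ p < m := by
    rw [if_neg (by rw [hnv.1]; rw [hnv.2] at hk; omega)] at hlt; exact hlt
  obtain ⟨κ', p', a, b, c, rfl⟩ := h.surj m hv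
  have e : nd κ' p' = nd κ (p + 1) := by
    by_contra hne
    have ho := (h.ord κ p κ' p' h1 h2.le h3 a b c _ (h.on_mn h1 h2.le h3) hm).1 hlt'
    have ho2 : nd κ (p + 1) < nd κ' p' := by
      apply (h.ord κ (p + 1) κ' p' (by omega) h2 h3 a b c _ (h.on_mn (by omega) h2 h3) hm).2
      rcases ho with ho | ⟨rfl, ho⟩
      · exact Or.inl ho
      · refine Or.inr ⟨rfl, ?_⟩
        have : p' ≠ p + 1 := by rintro rfl; exact hne rfl
        omega
    have ho3 : nd κ p < nd κ (p + 1) :=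
      (h.ord κ p κ (p + 1) h1 h2.le h3 (by omega) h2 h3 _ (h.on_mn h1 h2.le h3)
        (h.on_mn (by omega) h2 h3)).2 (by omega)
    refine hseg (nd κ (p + 1)) ?_ ?_
    · have hv2 := h.valid κ (p + 1) (by omega) h2 h3
      simp only [segList, nodesOn, List.mem_filter, List.mem_map, List.mem_range,
        decide_eq_true_eq]
      refine ⟨⟨⟨nd κ (p + 1) - 1, ?_, ?_⟩, h.on_mn (by omega) h2 h3⟩, ?_⟩
      · have := hv2.1; have := hv2.2; omega
      · have := hv2.1; omega
      · omega
    · right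
      rw [h.oth_mn κ (p + 1) (by omega) h2 h3]
      rw [hnv.2] at hk
      rw [hnv.1, hnv.2]
      omega
  refine ⟨e, ?_⟩
  rw [e, h.oth_mn κ (p + 1) (by omega) h2 h3] at ht
  exact ht

lemma backA (h : Blk σ n w nd) {κ p k m : ℕ} {ms : List ℕ} (h1 : 1 ≤ p) (h2 : p ≤ κ) (h3 : κ ≤ n)
    (hs : σ κ = false) (hk : mn σ n κ ≤ k)
    (ht : TravelOK w k (mn σ n κ) (nd κ p) (m :: ms)) :
    ∃ p2, 1 ≤ p2 ∧ p2 < p ∧ m = nd κ p2 ∧ TravelOK w k (sd σ n κ p2) (nd κ p2) ms := by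
  obtain ⟨hv, hm, hlt, hseg, ht⟩ := ht
  rw [if_pos hk] at hlt
  obtain ⟨κ', p', a, b, c, rfl⟩ := h.surj m hv
  have ho := (h.ord κ' p' κ p a b c h1 h2 h3 _ hm (h.on_mn h1 h2 h3)).1 hlt
  rcases ho with ho | ⟨rfl, ho⟩
  · exfalso
    have := h.on_mem a b c hm
    rcases off_nest σ n κ' κ ho h3 with hh | hh
    · rw [hs] at hh; simp at hh
    · simp only [mn, hs] at this
      simp at this
      omega
  · refine ⟨p', a, ho, rfl, ?_⟩
    rwa [h.oth_mn _ _ a b c] at ht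

lemma stateS (h : Blk σ n w nd) {k : ℕ} : ∀ (N : ℕ) (ms : List ℕ), ms.length ≤ N →
    ∀ κ p r, 1 ≤ p → p ≤ κ → κ ≤ n →
    NodeOnWire w (nd κ p) r → (r = sd σ n κ p ∨ p = κ) → off σ n κ + 1 ≤ k → k ≤ off σ n κ + κ →
    k + 1 ≤ r → TravelOK w k r (nd κ p) ms → r = k + 1 ∧ ms = [] := by
  intro N
  induction N with
  | zero =>
    intro ms hN κ p r _ _ _ _ _ _ _ _ ht
    obtain rfl : ms = [] := List.length_eq_zero_iff.1 (by omega)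
    exact ⟨ht.1, rfl⟩
  | succ N ih =>
    intro ms hN κ p r h1 h2 h3 hr hs hk1 hk2 hkr ht
    cases ms with
    | nil => exact ⟨ht.1, rfl⟩
    | cons m ms =>
      exfalso
      have hN' : ms.length ≤ N := by simpa using hN
      obtain ⟨hv, hm, hlt, hseg, ht⟩ := ht
      rw [if_neg (by omega)] at hlt
      obtain ⟨κ', p', hκ, a, b, c, rfl, hrs⟩ := h.below h1 h2 h3 hr hs hv hm hlt
      have hI := h.on_mem h1 h2 h3 hr
      rw [hrs, h.oth_sd _ _ a b c] at ht
      rcases off_nest σ n κ κ' hκ c with ⟨hh, hh1, hh2⟩ | ⟨hh, hh1, hh2⟩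
      · have hnv : mn σ n κ' = off σ n κ' + κ' + 1 ∧ ∀ p, sd σ n κ' p = off σ n κ' + p := by
          simp [mn, sd, hh]
        rw [hnv.2] at hrs
        rcases b.lt_or_eq with hb | hb
        · cases ms with
          | nil =>
            have := ht.1
            omega
          | cons m2 ms =>
            obtain ⟨-, ht⟩ := h.fwdD a hb c hh (by rw [hnv.2]; omega) ht
            have := (ih ms (by simp at hN'; omega) κ' (p' + 1) _ (by omega) hb c
              (h.on_sd (by omega) hb c) (Or.inl rfl) (by omega) (by omega)
              (by rw [hnv.2]; omega) ht).1
            rw [hnv.2] at this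
            omega
        · have := (ih ms hN' κ' p' _ a b c (h.on_mn a b c) (Or.inr hb) (by omega) (by omega)
            (by omega) ht).1
          omega
      · have hnv : mn σ n κ' = off σ n κ' + 1 ∧ ∀ p, sd σ n κ' p = off σ n κ' + κ' + 2 - p := by
          simp [mn, sd, hh]
        rw [hnv.2] at hrs
        cases ms with
        | nil =>
          have := ht.1
          omega
        | cons m2 ms =>
          obtain ⟨p2, q1, q2, -, ht⟩ := h.backA a b c hh (by omega) ht
          have := (ih ms (by simp at hN'; omega) κ' p2 _ q1 (by omega) c
              (h.on_sd q1 (by omega) c) (Or.inl rfl) (by omega) (by omega)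
              (by rw [hnv.2]; omega) ht).1
          rw [hnv.2] at this
          omega

lemma stateU (h : Blk σ n w nd) {k K : ℕ} (hK : K ≤ n) (hkK : off σ n K + K + 1 ≤ k) :
    ∀ (ms : List ℕ) κ p r, 1 ≤ p → p ≤ κ → κ ≤ K → NodeOnWire w (nd κ p) r →
    ¬ TravelOK w k r (nd κ p) ms := by
  have hle : ∀ κ p r, 1 ≤ p → p ≤ κ → κ ≤ K → NodeOnWire w (nd κ p) r → r ≤ k := by
    intro κ p r h1 h2 h3 hr
    have := h.on_mem h1 h2 (by omega) hr
    rcases h3.lt_or_eq with h3 | rfl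
    · rcases off_nest σ n κ K h3 hK with hh | hh <;> omega
    · omega
  intro ms
  induction ms with
  | nil =>
    intro κ p r h1 h2 h3 hr ht
    have := hle κ p r h1 h2 h3 hr
    have := ht.1
    omega
  | cons m ms ih =>
    intro κ p r h1 h2 h3 hr ht
    obtain ⟨hv, hm, hlt, hseg, ht⟩ := ht
    rw [if_pos (hle κ p r h1 h2 h3 hr)] at hlt
    obtain ⟨κ', p', a, b, c, rfl⟩ := h.surj m hv
    have ho := (h.ord κ' p' κ p a b c h1 h2 (by omega) _ hm hr).1 hlt
    refine ih κ' p' _ a b (by omega) ?_ ht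
    rcases (h.on κ' p' a b c r).1 hm with e | e
    · rw [e, h.oth_mn _ _ a b c]; exact h.on_sd a b c
    · rw [e, h.oth_sd _ _ a b c]; exact h.on_mn a b c

end Blk


/-! ### Classification of the rigorous paths -/

/-- the start of the `(κ, p)`-th path. -/
def gk (σ : ℕ → Bool) (n κ p : ℕ) : ℕ :=
  if σ κ then off σ n κ + p else off σ n κ + κ + 1 - p

/-- the switching nodes of the `(κ, p)`-th path. -/
def msg (σ : ℕ → Bool) (nd : ℕ → ℕ → ℕ) (κ p : ℕ) : List ℕ :=
  if p = κ then [nd κ κ] else if σ κ then [nd κ p, nd κ (p + 1)] else [nd κ (p + 1), nd κ p]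

lemma mem_nodesOn {w : List ℕ} {r j : ℕ} :
    j ∈ nodesOn w r ↔ ValidNode w j ∧ NodeOnWire w j r := by
  simp only [nodesOn, List.mem_filter, List.mem_map, List.mem_range, decide_eq_true_eq, ValidNode]
  constructor
  · rintro ⟨⟨a, h1, rfl⟩, h2⟩
    exact ⟨⟨by omega, by omega⟩, h2⟩
  · rintro ⟨⟨h1, h2⟩, h3⟩
    exact ⟨⟨j - 1, by omega, by omega⟩, h3⟩

lemma nodup_nodesOn (w : List ℕ) (r : ℕ) : (nodesOn w r).Nodup := by
  unfold nodesOn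
  exact (List.Nodup.map (fun a b h => by simpa using h) List.nodup_range).filter _

lemma mem_tailList {w : List ℕ} {r a j : ℕ} :
    j ∈ tailList w r a ↔ ValidNode w j ∧ NodeOnWire w j r ∧ a < j := by
  simp only [tailList, List.mem_filter, mem_nodesOn, decide_eq_true_eq, and_assoc]

lemma nodup_tailList (w : List ℕ) (r a : ℕ) : (tailList w r a).Nodup :=
  (nodup_nodesOn w r).filter _

namespace Blk

variable {σ : ℕ → Bool} {n : ℕ} {w : List ℕ} {nd : ℕ → ℕ → ℕ}

lemma classify (h : Blk σ n w nd) {k : ℕ} {ms : List ℕ} (hp : IsGPPath n w k ms) :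
    ∃ κ p, 1 ≤ p ∧ p ≤ κ ∧ κ ≤ n ∧ k = gk σ n κ p ∧ ms = msg σ nd κ p := by
  obtain ⟨-, -, hp, -⟩ := hp
  cases ms with
  | nil => exact hp.elim
  | cons m rest =>
    obtain ⟨hv, hm, -, ht⟩ := hp
    obtain ⟨κ, p, h1, h2, h3, rfl⟩ := h.surj m hv
    have hm' := (h.on κ p h1 h2 h3 k).1 hm
    cases hs : σ κ
    · have hnv : mn σ n κ = off σ n κ + 1 ∧ ∀ p, sd σ n κ p = off σ n κ + κ + 2 - p := by
        simp [mn, sd, hs]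
      rcases hm' with rfl | rfl
      · rw [h.oth_mn _ _ h1 h2 h3] at ht
        obtain ⟨e1, rfl⟩ := h.stateS _ _ le_rfl κ p _ h1 h2 h3 (h.on_sd h1 h2 h3) (Or.inl rfl)
          (by omega) (by omega) (by rw [hnv.1, hnv.2]; omega) ht
        rw [hnv.1, hnv.2] at e1
        obtain rfl : p = κ := by omega
        refine ⟨p, p, h1, h2, h3, ?_, ?_⟩
        · simp [gk, hs]; omega
        · simp [msg]
      · rw [h.oth_sd _ _ h1 h2 h3] at ht
        cases rest with
        | nil =>
          have := ht.1
          rw [hnv.1, hnv.2] at this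
          omega
        | cons m2 rest =>
          obtain ⟨p2, a, b, rfl, ht2⟩ := h.backA h1 h2 h3 hs (by rw [hnv.1, hnv.2]; omega) ht
          obtain ⟨e1, rfl⟩ := h.stateS (k := sd σ n κ p) _ _ le_rfl κ p2 _ a (by omega) h3 (h.on_sd a (by omega) h3)
            (Or.inl rfl) (by rw [hnv.2]; omega) (by rw [hnv.2]; omega)
            (by rw [hnv.2, hnv.2]; omega) ht2
          rw [hnv.2, hnv.2] at e1
          obtain rfl : p = p2 + 1 := by omega
          refine ⟨κ, p2, a, by omega, h3, ?_, ?_⟩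
          · rw [hnv.2]; simp [gk, hs]
          · simp [msg, hs]; omega
    · have hnv : mn σ n κ = off σ n κ + κ + 1 ∧ ∀ p, sd σ n κ p = off σ n κ + p := by
        simp [mn, sd, hs]
      rcases hm' with rfl | rfl
      · exfalso
        rw [h.oth_mn _ _ h1 h2 h3] at ht
        exact h.stateU h3 (by rw [hnv.1]) _ κ p _ h1 h2 le_rfl (h.on_sd h1 h2 h3) ht
      · rw [h.oth_sd _ _ h1 h2 h3] at ht
        rcases h2.lt_or_eq with hb | rfl
        · cases rest with
          | nil =>
            have := ht.1
            rw [hnv.1, hnv.2] at this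
            omega
          | cons m2 rest =>
            obtain ⟨rfl, ht2⟩ := h.fwdD h1 hb h3 hs (by rw [hnv.2, hnv.2]; omega) ht
            obtain ⟨e1, rfl⟩ := h.stateS (k := sd σ n κ p) _ _ le_rfl κ (p + 1) _ (by omega) hb h3
              (h.on_sd (by omega) hb h3)
              (Or.inl rfl) (by rw [hnv.2]; omega) (by rw [hnv.2]; omega)
              (by rw [hnv.2, hnv.2]; omega) ht2
            refine ⟨κ, p, h1, h2, h3, ?_, ?_⟩
            · rw [hnv.2]; simp [gk, hs]
            · simp [msg, hs]; omega
        · obtain ⟨e1, rfl⟩ := h.stateS (k := sd σ n p p) _ _ le_rfl p p _ h1 h2 h3 (h.on_mn h1 h2 h3) (Or.inr rfl)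
            (by rw [hnv.2]; omega) (by rw [hnv.2]) (by rw [hnv.1, hnv.2]) ht
          refine ⟨p, p, h1, h2, h3, ?_, ?_⟩
          · rw [hnv.2]; simp [gk, hs]
          · simp [msg]

/-- tails from a settled node. -/
lemma tail_spec (h : Blk σ n w nd) {κ p r : ℕ} (h1 : 1 ≤ p) (h2 : p ≤ κ) (h3 : κ ≤ n)
    (hr : NodeOnWire w (nd κ p) r) (hs : r = sd σ n κ p ∨ p = κ) {j : ℕ}
    (hj : j ∈ tailList w r (nd κ p)) :
    ∃ κ' p', κ < κ' ∧ 1 ≤ p' ∧ p' ≤ κ' ∧ κ' ≤ n ∧ j = nd κ' p' ∧ r = sd σ n κ' p' := by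
  obtain ⟨a, b, c⟩ := mem_tailList.1 hj
  exact h.below h1 h2 h3 hr hs a b c

lemma tail_ok (h : Blk σ n w nd) {κ p r k : ℕ} (h1 : 1 ≤ p) (h2 : p ≤ κ) (h3 : κ ≤ n)
    (hr : NodeOnWire w (nd κ p) r) (hs : r = sd σ n κ p ∨ p = κ)
    (hk1 : off σ n κ + 1 ≤ k) (hk2 : k ≤ off σ n κ + κ) (hrk : r = k ∨ r = k + 1) :
    ∀ j ∈ tailList w r (nd κ p), ¬ Forbidden w k j r := by
  intro j hj hF
  obtain ⟨κ', p', hκ, a, b, c, rfl, hrs⟩ := h.tail_spec h1 h2 h3 hr hs hj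
  unfold Forbidden at hF
  have e : otherWire w (nd κ' p') r = mn σ n κ' := by rw [hrs]; exact h.oth_sd _ _ a b c
  rw [e] at hF
  rcases off_nest σ n κ κ' hκ c with ⟨hh, hh1, hh2⟩ | ⟨hh, hh1, hh2⟩
  · have : mn σ n κ' = off σ n κ' + κ' + 1 := by simp [mn, hh]
    omega
  · have : mn σ n κ' = off σ n κ' + 1 := by simp [mn, hh]
    omega

lemma tails_disj (h : Blk σ n w nd) {κ p q r s : ℕ} (h1 : 1 ≤ p) (h2 : p ≤ κ) (h3 : κ ≤ n)
    (h1' : 1 ≤ q) (h2' : q ≤ κ)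
    (hr : NodeOnWire w (nd κ p) r) (hrs : r = sd σ n κ p ∨ p = κ)
    (hs : NodeOnWire w (nd κ q) s) (hss : s = sd σ n κ q ∨ q = κ) (hne : r ≠ s) {j : ℕ}
    (hj : j ∈ tailList w r (nd κ p)) (hj' : j ∈ tailList w s (nd κ q)) : False := by
  obtain ⟨κ1, p1, hκ, a, b, c, rfl, e⟩ := h.tail_spec h1 h2 h3 hr hrs hj
  obtain ⟨κ2, p2, hκ2, a2, b2, c2, e', e2⟩ := h.tail_spec h1' h2' h3 hs hss hj'
  obtain ⟨rfl, rfl⟩ := h.inj _ _ _ _ a b c a2 b2 c2 e'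
  exact hne (e.trans e2.symm)

lemma tail_block (h : Blk σ n w nd) {κ p q r : ℕ} (h1 : 1 ≤ p) (h2 : p ≤ κ) (h3 : κ ≤ n)
    (h1' : 1 ≤ q) (h2' : q ≤ κ)
    (hr : NodeOnWire w (nd κ p) r) (hrs : r = sd σ n κ p ∨ p = κ)
    (hj : nd κ q ∈ tailList w r (nd κ p)) : False := by
  obtain ⟨κ1, p1, hκ, a, b, c, e', e⟩ := h.tail_spec h1 h2 h3 hr hrs hj
  obtain ⟨rfl, rfl⟩ := h.inj _ _ _ _ h1' h2' h3 a b c e'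
  omega

lemma seg_nil (h : Blk σ n w nd) {κ p : ℕ} (h1 : 1 ≤ p) (h2 : p < κ) (h3 : κ ≤ n) :
    segList w (mn σ n κ) (nd κ p) (nd κ (p + 1)) = [] ∧
    segList w (mn σ n κ) (nd κ (p + 1)) (nd κ p) = [] ∧ nd κ p < nd κ (p + 1) := by
  have hlt : nd κ p < nd κ (p + 1) :=
      (h.ord κ p κ (p + 1) h1 h2.le h3 (by omega) h2 h3 _ (h.on_mn h1 h2.le h3)
        (h.on_mn (by omega) h2 h3)).2 (by omega)
  have key : ∀ j, ValidNode w j → NodeOnWire w j (mn σ n κ) → nd κ p < j →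
      j < nd κ (p + 1) → False := by
    intro j hv hj ha hb
    obtain ⟨κ', p', a, b, c, rfl⟩ := h.surj j hv
    have q1 := (h.ord _ _ _ _ h1 h2.le h3 a b c _ (h.on_mn h1 h2.le h3) hj).1 ha
    have q2 := (h.ord _ _ _ _ a b c (by omega) h2 h3 _ hj (h.on_mn (by omega) h2 h3)).1 hb
    omega
  refine ⟨?_, ?_, hlt⟩
  · rw [List.eq_nil_iff_forall_not_mem]
    intro j hj
    simp only [segList, List.mem_filter, mem_nodesOn, decide_eq_true_eq] at hj
    exact key j hj.1.1 hj.1.2 (by omega) (by omega)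
  · rw [List.eq_nil_iff_forall_not_mem]
    intro j hj
    simp only [segList, List.mem_filter, mem_nodesOn, decide_eq_true_eq] at hj
    exact key j hj.1.1 hj.1.2 (by omega) (by omega)

lemma path_one (h : Blk σ n w nd) {κ k : ℕ} (h1 : 1 ≤ κ) (h3 : κ ≤ n)
    (hk1 : off σ n κ + 1 ≤ k) (hk2 : k ≤ off σ n κ + κ)
    (hk : NodeOnWire w (nd κ κ) k) (hk' : NodeOnWire w (nd κ κ) (k + 1))
    (ho : otherWire w (nd κ κ) k = k + 1) : IsGPPath n w k [nd κ κ] := by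
  have hoff := off_le σ n κ
  refine ⟨by omega, by omega, ⟨h.valid _ _ h1 le_rfl h3, hk, ?_, ?_⟩, ?_⟩
  · exact h.tail_ok h1 le_rfl h3 hk (Or.inr rfl) hk1 hk2 (Or.inl rfl)
  · rw [ho]
    exact ⟨rfl, h.tail_ok h1 le_rfl h3 hk' (Or.inr rfl) hk1 hk2 (Or.inr rfl)⟩
  · simp only [visitList, visitTail, ho]
    rw [List.nodup_append]
    refine ⟨nodup_tailList _ _ _, ?_, ?_⟩
    · rw [List.nodup_cons]
      exact ⟨fun hh => h.tail_block h1 le_rfl h3 h1 le_rfl hk' (Or.inr rfl) hh,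
        nodup_tailList _ _ _⟩
    · rintro a ha b hb rfl
      rcases List.mem_cons.1 hb with rfl | hb
      · exact h.tail_block h1 le_rfl h3 h1 le_rfl hk (Or.inr rfl) ha
      · exact h.tails_disj h1 le_rfl h3 h1 le_rfl hk (Or.inr rfl) hk' (Or.inr rfl)
          (by omega) ha hb

lemma path_two (h : Blk σ n w nd) {κ p q k : ℕ} (h1 : 1 ≤ p) (h2 : p ≤ κ) (h3 : κ ≤ n)
    (h1' : 1 ≤ q) (h2' : q ≤ κ)
    (hk1 : off σ n κ + 1 ≤ k) (hk2 : k ≤ off σ n κ + κ)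
    (hk : k = sd σ n κ p) (hk' : k + 1 = sd σ n κ q)
    (hseg : segList w (mn σ n κ) (nd κ p) (nd κ q) = [])
    (hdir : if mn σ n κ ≤ k then nd κ q < nd κ p else nd κ p < nd κ q) :
    IsGPPath n w k [nd κ p, nd κ q] := by
  have hoff := off_le σ n κ
  have o1 : otherWire w (nd κ p) k = mn σ n κ := by rw [hk]; exact h.oth_sd _ _ h1 h2 h3
  have o2 : otherWire w (nd κ q) (mn σ n κ) = k + 1 := by rw [hk']; exact h.oth_mn _ _ h1' h2' h3
  have n1 : NodeOnWire w (nd κ p) k := by rw [hk]; exact h.on_sd h1 h2 h3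
  have n2 : NodeOnWire w (nd κ q) (k + 1) := by rw [hk']; exact h.on_sd h1' h2' h3
  refine ⟨by omega, by omega, ⟨h.valid _ _ h1 h2 h3, n1, ?_, ?_⟩, ?_⟩
  · exact h.tail_ok h1 h2 h3 n1 (Or.inl hk) hk1 hk2 (Or.inl rfl)
  · rw [o1]
    refine ⟨h.valid _ _ h1' h2' h3, h.on_mn h1' h2' h3, hdir, ?_, ?_⟩
    · rw [hseg]; simp
    · rw [o2]
      exact ⟨rfl, h.tail_ok h1' h2' h3 n2 (Or.inl hk') hk1 hk2 (Or.inr rfl)⟩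
  · simp only [visitList, visitTail, o1, o2, hseg, List.nil_append]
    rw [List.nodup_append]
    refine ⟨nodup_tailList _ _ _, ?_, ?_⟩
    · rw [List.nodup_cons, List.nodup_cons]
      refine ⟨fun hh => ?_, ?_, nodup_tailList _ _ _⟩
      · rcases List.mem_cons.1 hh with hh | hh
        · rw [hh] at hdir; simp at hdir
        · exact h.tail_block h1' h2' h3 h1 h2 n2 (Or.inl hk') hh
      · exact fun hh => h.tail_block h1' h2' h3 h1' h2' n2 (Or.inl hk') hh
    · rintro a ha b hb rfl
      rcases List.mem_cons.1 hb with rfl | hb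
      · exact h.tail_block h1 h2 h3 h1 h2 n1 (Or.inl hk) ha
      · rcases List.mem_cons.1 hb with rfl | hb
        · exact h.tail_block h1 h2 h3 h1' h2' n1 (Or.inl hk) ha
        · exact h.tails_disj h1 h2 h3 h1' h2' n1 (Or.inl hk) n2 (Or.inl hk')
            (by omega) ha hb

lemma isGP (h : Blk σ n w nd) {κ p : ℕ} (h1 : 1 ≤ p) (h2 : p ≤ κ) (h3 : κ ≤ n) :
    IsGPPath n w (gk σ n κ p) (msg σ nd κ p) := by
  rcases h2.lt_or_eq with hb | rfl
  · obtain ⟨s1, s2, s3⟩ := h.seg_nil h1 hb h3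
    cases hs : σ κ
    · simp only [gk, msg, hs, if_neg hb.ne, Bool.false_eq_true, if_false]
      apply h.path_two (by omega) hb h3 h1 h2
      · omega
      · omega
      · simp only [sd, hs, Bool.false_eq_true, if_false]; omega
      · simp only [sd, hs, Bool.false_eq_true, if_false]; omega
      · exact s2
      · rw [if_pos]
        · exact s3
        · simp only [mn, hs, Bool.false_eq_true, if_false]; omega
    · simp only [gk, msg, hs, if_neg hb.ne, if_true]
      apply h.path_two h1 h2 h3 (by omega) hb
      · omega
      · omega
      · simp only [sd, hs, if_true]
      · simp only [sd, hs, if_true]; omega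
      · exact s1
      · rw [if_neg]
        · exact s3
        · simp only [mn, hs, if_true]; omega
  · simp only [msg, if_true]
    have e : gk σ n p p = sd σ n p p ∧ gk σ n p p + 1 = mn σ n p ∨
        gk σ n p p = mn σ n p ∧ gk σ n p p + 1 = sd σ n p p := by
      unfold gk sd mn; split_ifs <;> omega
    have hI : off σ n p + 1 ≤ gk σ n p p ∧ gk σ n p p ≤ off σ n p + p := by
      unfold gk; split_ifs <;> omega
    apply h.path_one h1 h3 hI.1 hI.2
    · rw [h.on _ _ h1 h2 h3]; omega
    · rw [h.on _ _ h1 h2 h3]; omega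
    · rcases e with ⟨e1, e2⟩ | ⟨e1, e2⟩
      · rw [e2, e1]; exact h.oth_sd _ _ h1 h2 h3
      · rw [e2, e1]; exact h.oth_mn _ _ h1 h2 h3

end Blk

lemma sum_switch (n : ℕ) (t : Fin (Dim n) → ℝ) (L : List (ℕ × ℕ × ℕ)) (hL : ∀ e ∈ L, 1 ≤ e.1)
    (s : ℕ × ℕ × ℕ → ℝ) :
    ∑ j : Fin (Dim n), ((L.map (fun e => if e.1 = (j : ℕ) + 1 then s e else 0)).sum) * t j
      = (L.map (fun e => s e * entry n t (e.1 - 1))).sum := by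
  induction L with
  | nil => simp
  | cons e L ih =>
    simp only [List.map_cons, List.sum_cons, add_mul, Finset.sum_add_distrib]
    rw [ih (fun x hx => hL x (by simp [hx]))]
    congr 1
    have h1 := hL e (by simp)
    unfold entry
    split_ifs with hh
    · rw [Finset.sum_eq_single ⟨e.1 - 1, hh⟩]
      · rw [if_pos (by simp; omega)]
      · intro b _ hb
        rw [if_neg, zero_mul]
        intro e'
        apply hb
        ext
        simp; omega
      · simp
    · rw [mul_zero]
      apply Finset.sum_eq_zero
      intro b _
      rw [if_neg, zero_mul]
      have := b.2
      omega

/-- the coordinates in block form. -/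
def tv (n : ℕ) (nd : ℕ → ℕ → ℕ) (t : Fin (Dim n) → ℝ) (κ p : ℕ) : ℝ :=
  if 1 ≤ p ∧ p ≤ κ then entry n t (nd κ p - 1) else 0

namespace Blk

variable {σ : ℕ → Bool} {n : ℕ} {w : List ℕ} {nd : ℕ → ℕ → ℕ}

lemma ineq_eq (h : Blk σ n w nd) {κ p : ℕ} (h1 : 1 ≤ p) (h2 : p ≤ κ) (h3 : κ ≤ n)
    (t : Fin (Dim n) → ℝ) :
    stringIneq n w (gk σ n κ p, msg σ nd κ p) t = tv n nd t κ p - tv n nd t κ (p + 1) := by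
  have hv := fun p h1 h2 => (h.valid κ p h1 h2 h3).1
  unfold stringIneq normalVec coeff
  simp only
  rcases h2.lt_or_eq with hb | rfl
  · have hne := mn_ne_sd σ n κ
    have v1 := hv p h1 h2
    have v2 := hv (p + 1) (by omega) hb
    cases hs : σ κ
    · have e1 : gk σ n κ p = sd σ n κ (p + 1) := by
        simp only [gk, sd, hs, Bool.false_eq_true, if_false]; omega
      rw [sum_switch]
      · simp only [msg, hs, if_neg hb.ne, Bool.false_eq_true, if_false, pathSwitches, e1]
        rw [h.oth_sd _ _ (by omega) hb h3, h.oth_mn _ _ h1 h2 h3]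
        simp only [List.map_cons, List.map_nil, List.sum_cons, List.sum_nil, tv]
        rw [if_neg (by simp only [mn, sd, hs, Bool.false_eq_true, if_false]; omega),
          if_pos (by simp only [mn, sd, hs, Bool.false_eq_true, if_false]; omega),
          if_pos (by omega), if_pos (by omega)]
        ring
      · simp only [msg, hs, if_neg hb.ne, Bool.false_eq_true, if_false, pathSwitches]
        simp
        omega
    · have e1 : gk σ n κ p = sd σ n κ p := by
        simp only [gk, sd, hs, if_true]
      rw [sum_switch]
      · simp only [msg, hs, if_neg hb.ne, if_true, pathSwitches, e1]
        rw [h.oth_sd _ _ h1 h2 h3, h.oth_mn _ _ (by omega) hb h3]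
        simp only [List.map_cons, List.map_nil, List.sum_cons, List.sum_nil, tv]
        rw [if_pos (by simp only [mn, sd, hs, if_true]; omega),
          if_neg (by simp only [mn, sd, hs, if_true]; omega),
          if_pos (by omega), if_pos (by omega)]
        ring
      · simp only [msg, hs, if_neg hb.ne, if_true, pathSwitches]
        simp
        omega
  · have v1 := hv p h1 h2
    have e : gk σ n p p = sd σ n p p ∧ gk σ n p p + 1 = mn σ n p ∨
        gk σ n p p = mn σ n p ∧ gk σ n p p + 1 = sd σ n p p := by
      unfold gk sd mn; split_ifs <;> omega
    have ho : otherWire w (nd p p) (gk σ n p p) = gk σ n p p + 1 := by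
      rcases e with ⟨e1, e2⟩ | ⟨e1, e2⟩
      · rw [e2, e1]; exact h.oth_sd _ _ h1 h2 h3
      · rw [e2, e1]; exact h.oth_mn _ _ h1 h2 h3
    rw [sum_switch]
    · simp only [msg, if_true, pathSwitches, ho]
      simp [tv, h1]
    · simp only [msg, if_true, pathSwitches]
      simp
      omega

lemma mem_cone (h : Blk σ n w nd) (t : Fin (Dim n) → ℝ) :
    t ∈ stringCone n w ↔ ∀ κ p, 1 ≤ p → p ≤ κ → κ ≤ n →
      0 ≤ tv n nd t κ p - tv n nd t κ (p + 1) := by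
  constructor
  · intro ht κ p h1 h2 h3
    rw [← h.ineq_eq h1 h2 h3]
    exact ht _ (h.isGP h1 h2 h3)
  · rintro ht ⟨k, ms⟩ hp
    obtain ⟨κ, p, h1, h2, h3, rfl, rfl⟩ := h.classify hp
    rw [h.ineq_eq h1 h2 h3]
    exact ht κ p h1 h2 h3

end Blk


/-! ### The `λ`-inequalities -/

/-- coefficient attached to two columns. -/
def lc (c c' : ℕ) : ℝ := if c' = c then -2 else if c' = c + 1 ∨ c' + 1 = c then 1 else 0

lemma lam_sum {σ : ℕ → Bool} {n : ℕ} {w : List ℕ} {f : Equiv.Perm ℕ}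
    (h : SimVia w (canon σ n) f) (G : ℕ → ℝ) (t : Fin (Dim n) → ℝ) :
    ∑ k : Fin (Dim n), G ((k : ℕ) + 1) * t k =
      ∑ κ ∈ Finset.Ioc 0 n, ∑ p ∈ Finset.Ioc 0 κ,
        G (f (tri κ + p)) * tv n (fun κ p => f (tri κ + p)) t κ p := by
  have hb := Blk.of_sim h
  have hlen : w.length = Dim n := by rw [h.len, canon_length, tri_eq]
  have h0 : ∑ k : Fin (Dim n), G ((k : ℕ) + 1) * t k =
      ∑ k : Fin (Dim n), (fun a : ℕ => G (a + 1) * entry n t a) k := by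
    apply Finset.sum_congr rfl
    intro k _
    simp [entry]
  rw [h0, Fin.sum_univ_eq_sum_range (fun a : ℕ => G (a + 1) * entry n t a) (Dim n),
    Finset.sum_sigma']
  symm
  apply Finset.sum_bij (fun (s : Σ _ : ℕ, ℕ) _ => f (tri s.1 + s.2) - 1)
  · rintro ⟨κ, p⟩ hs
    simp only [Finset.mem_sigma, Finset.mem_Ioc] at hs
    have hv := hb.valid κ p (by omega) (by omega) (by omega)
    rw [ValidNode, hlen] at hv
    simp only [Finset.mem_range]
    omega
  · rintro ⟨κ, p⟩ hs ⟨κ', p'⟩ hs' he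
    simp only [Finset.mem_sigma, Finset.mem_Ioc] at hs hs'
    have hv := hb.valid κ p (by omega) (by omega) (by omega)
    have hv' := hb.valid κ' p' (by omega) (by omega) (by omega)
    rw [ValidNode] at hv hv'
    simp only at he
    obtain ⟨rfl, rfl⟩ := hb.inj κ p κ' p' (by omega) (by omega) (by omega) (by omega) (by omega)
      (by omega) (by omega)
    rfl
  · intro a ha
    rw [Finset.mem_range] at ha
    obtain ⟨κ, p, h1, h2, h3, e⟩ := hb.surj (a + 1) ⟨by omega, by rw [hlen]; omega⟩
    refine ⟨⟨κ, p⟩, ?_, ?_⟩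
    · simp only [Finset.mem_sigma, Finset.mem_Ioc]; omega
    · simp only; omega
  · rintro ⟨κ, p⟩ hs
    simp only [Finset.mem_sigma, Finset.mem_Ioc] at hs
    have hv := hb.valid κ p (by omega) (by omega) (by omega)
    rw [ValidNode] at hv
    simp only [tv]
    rw [if_pos (by omega), Nat.sub_add_cancel hv.1]

lemma lam_iff {σ : ℕ → Bool} {n : ℕ} {w : List ℕ} {f : Equiv.Perm ℕ}
    (h : SimVia w (canon σ n) f) (lam : ℕ → ℤ) (t : Fin (Dim n) → ℝ) :
    t ∈ lamCone n w lam ↔ ∀ κ p, 1 ≤ p → p ≤ κ → κ ≤ n →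
      tv n (fun κ p => f (tri κ + p)) t κ p ≤ (lam (lt σ n κ p) : ℝ) +
        ∑ κ' ∈ Finset.Ioc 0 n, ∑ p' ∈ Finset.Ioc 0 κ',
          (if κ < κ' ∨ (κ = κ' ∧ p < p') then lc (lt σ n κ p) (lt σ n κ' p') else 0) *
            tv n (fun κ p => f (tri κ + p)) t κ' p' := by
  have hb := Blk.of_sim h
  have hlen : w.length = Dim n := by rw [h.len, canon_length, tri_eq]
  have hlet : ∀ κ p, 1 ≤ p → p ≤ κ → κ ≤ n → letterAt w (f (tri κ + p)) = lt σ n κ p := by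
    intro κ p h1 h2 h3
    rw [h.letter _ (canon_valid σ n κ p h1 h2 h3), (canon_data σ n κ p h1 h2 h3).1]
  have key : ∀ κ p, 1 ≤ p → p ≤ κ → κ ≤ n → ∀ j : Fin (Dim n), (j : ℕ) + 1 = f (tri κ + p) →
      (LamIneq n w lam j t ↔ tv n (fun κ p => f (tri κ + p)) t κ p ≤ (lam (lt σ n κ p) : ℝ) +
        ∑ κ' ∈ Finset.Ioc 0 n, ∑ p' ∈ Finset.Ioc 0 κ',
          (if κ < κ' ∨ (κ = κ' ∧ p < p') then lc (lt σ n κ p) (lt σ n κ' p') else 0) *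
            tv n (fun κ p => f (tri κ + p)) t κ' p') := by
    intro κ p h1 h2 h3 j hj
    have e1 : t j = tv n (fun κ p => f (tri κ + p)) t κ p := by
      simp only [tv]
      rw [if_pos ⟨h1, h2⟩, ← hj]
      simp [entry]
    have e2 := lam_sum h (fun q => if (j : ℕ) + 1 < q then lamCoeff w ((j : ℕ) + 1) q else 0) t
    simp only [Nat.add_lt_add_iff_right] at e2
    unfold LamIneq
    rw [e1, e2, hj, hlet κ p h1 h2 h3]
    have e3 : ∀ κ' ∈ Finset.Ioc 0 n, ∀ p' ∈ Finset.Ioc 0 κ',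
        (if f (tri κ + p) < f (tri κ' + p') then lamCoeff w (f (tri κ + p)) (f (tri κ' + p'))
          else 0) =
        (if κ < κ' ∨ (κ = κ' ∧ p < p') then lc (lt σ n κ p) (lt σ n κ' p') else 0) := by
      intro κ' hκ' p' hp'
      rw [Finset.mem_Ioc] at hκ' hp'
      have q1 : 1 ≤ p' := by omega
      simp only [← tri_lt h1 h2 q1 hp'.2]
      have e4 : lamCoeff w (f (tri κ + p)) (f (tri κ' + p')) = lc (lt σ n κ p) (lt σ n κ' p') := by
        unfold lamCoeff lc
        rw [hlet κ p h1 h2 h3, hlet κ' p' q1 hp'.2 hκ'.2]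
      rw [e4]
      by_cases hN : Near (lt σ n κ p) (lt σ n κ' p')
      · have hv := canon_valid σ n κ p h1 h2 h3
        have hv' := canon_valid σ n κ' p' q1 hp'.2 hκ'.2
        have l1 := (canon_data σ n κ p h1 h2 h3).1
        have l2 := (canon_data σ n κ' p' q1 hp'.2 hκ'.2).1
        have hiff : f (tri κ + p) < f (tri κ' + p') ↔ tri κ + p < tri κ' + p' := by
          constructor
          · intro hl
            by_contra hcon
            rcases (not_lt.1 hcon).lt_or_eq with hc | hc
            · have := h.ord _ _ hv' hv hc (Or.inl (by rw [l1, l2]; exact ⟨hN.2, hN.1⟩))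
              omega
            · rw [hc] at hl; omega
          · intro hl
            exact h.ord _ _ hv hv' hl (Or.inl (by rw [l1, l2]; exact hN))
        simp only [hiff]
      · have : lc (lt σ n κ p) (lt σ n κ' p') = 0 := by
          unfold Near at hN
          unfold lc
          rw [if_neg (by omega), if_neg (by omega)]
        rw [this]; simp
    have e5 : ∑ κ' ∈ Finset.Ioc 0 n, ∑ p' ∈ Finset.Ioc 0 κ',
        (if f (tri κ + p) < f (tri κ' + p') then lamCoeff w (f (tri κ + p)) (f (tri κ' + p'))
          else 0) * tv n (fun κ p => f (tri κ + p)) t κ' p' = ∑ κ' ∈ Finset.Ioc 0 n,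
          ∑ p' ∈ Finset.Ioc 0 κ',
          (if κ < κ' ∨ (κ = κ' ∧ p < p') then lc (lt σ n κ p) (lt σ n κ' p') else 0) *
            tv n (fun κ p => f (tri κ + p)) t κ' p' := by
      apply Finset.sum_congr rfl
      intro κ' hκ'
      apply Finset.sum_congr rfl
      intro p' hp'
      rw [e3 κ' hκ' p' hp']
    rw [e5]
  constructor
  · intro ht κ p h1 h2 h3
    have hv := hb.valid κ p h1 h2 h3
    rw [ValidNode, hlen] at hv
    refine (key κ p h1 h2 h3 ⟨f (tri κ + p) - 1, by omega⟩ ?_).1 (ht _)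
    simp only; omega
  · intro ht j
    obtain ⟨κ, p, h1, h2, h3, e⟩ := hb.surj (j + 1) ⟨by omega, by rw [hlen]; omega⟩
    exact (key κ p h1 h2 h3 j e).2 (ht κ p h1 h2 h3)

lemma lc_block (σ : ℕ → Bool) (n κ p p' : ℕ) (h2 : p ≤ κ) (h2' : p' ≤ κ) :
    lc (lt σ n κ p) (lt σ n κ p') =
      -2 * (if p' = p then 1 else 0) + (if p' = p + 1 then 1 else 0) +
        (if p' + 1 = p then 1 else 0) := by
  unfold lc lt
  split_ifs <;> first | omega | norm_num

lemma sum_block (σ : ℕ → Bool) (n κ p : ℕ) (v : ℕ → ℝ) (hv0 : v 0 = 0) (hv : v (κ + 1) = 0)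
    (h1 : 1 ≤ p) (h2 : p ≤ κ) :
    ∑ p' ∈ Finset.Ioc 0 κ, lc (lt σ n κ p) (lt σ n κ p') * v p' =
      v (p - 1) - 2 * v p + v (p + 1) := by
  have : ∀ p' ∈ Finset.Ioc 0 κ, lc (lt σ n κ p) (lt σ n κ p') * v p' =
      -2 * (if p' = p then v p' else 0) + (if p' = p + 1 then v p' else 0) +
        (if p' = p - 1 then v p' else 0) := by
    intro p' hp'
    rw [Finset.mem_Ioc] at hp'
    rw [lc_block σ n κ p p' h2 hp'.2]
    split_ifs <;> first | omega | ring
  rw [Finset.sum_congr rfl this, Finset.sum_add_distrib, Finset.sum_add_distrib,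
    ← Finset.mul_sum, Finset.sum_ite_eq', Finset.sum_ite_eq', Finset.sum_ite_eq']
  have a1 : (if p + 1 ∈ Finset.Ioc 0 κ then v (p + 1) else 0) = v (p + 1) := by
    split_ifs with hh
    · rfl
    · rw [Finset.mem_Ioc] at hh
      obtain rfl : p = κ := by omega
      exact hv.symm
  have a2 : (if p - 1 ∈ Finset.Ioc 0 κ then v (p - 1) else 0) = v (p - 1) := by
    split_ifs with hh
    · rfl
    · rw [Finset.mem_Ioc] at hh
      obtain rfl : p = 1 := by omega
      exact hv0.symm
  rw [a1, a2, if_pos (by rw [Finset.mem_Ioc]; omega)]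
  ring

lemma sum_block_above (σ : ℕ → Bool) (n κ p : ℕ) (v : ℕ → ℝ) (hv : v (κ + 1) = 0)
    (h2 : p ≤ κ) :
    ∑ p' ∈ Finset.Ioc 0 κ, (if p < p' then lc (lt σ n κ p) (lt σ n κ p') else 0) * v p' =
      v (p + 1) := by
  have : ∀ p' ∈ Finset.Ioc 0 κ, (if p < p' then lc (lt σ n κ p) (lt σ n κ p') else 0) * v p' =
      (if p' = p + 1 then v p' else 0) := by
    intro p' hp'
    rw [Finset.mem_Ioc] at hp'
    rw [lc_block σ n κ p p' h2 hp'.2]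
    split_ifs <;> first | omega | ring
  rw [Finset.sum_congr rfl this, Finset.sum_ite_eq']
  split_ifs with hh
  · rfl
  · rw [Finset.mem_Ioc] at hh
    obtain rfl : p = κ := by omega
    exact hv.symm

/-- contribution of block `κ` to column `c`. -/
def bs (σ : ℕ → Bool) (n : ℕ) (T : ℕ → ℕ → ℝ) (κ c : ℕ) : ℝ :=
  ∑ p' ∈ Finset.Ioc 0 κ, lc c (lt σ n κ p') * T κ p'

lemma sum_split (σ : ℕ → Bool) (n κ p : ℕ) (T : ℕ → ℕ → ℝ) (hT : ∀ κ, T κ (κ + 1) = 0)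
    (h1 : 1 ≤ p) (h2 : p ≤ κ) (h3 : κ ≤ n) :
    ∑ κ' ∈ Finset.Ioc 0 n, ∑ p' ∈ Finset.Ioc 0 κ',
          (if κ < κ' ∨ (κ = κ' ∧ p < p') then lc (lt σ n κ p) (lt σ n κ' p') else 0) * T κ' p' =
      T κ (p + 1) + ∑ κ' ∈ Finset.Ioc κ n, bs σ n T κ' (lt σ n κ p) := by
  rw [← Finset.sum_Ioc_consecutive _ (Nat.zero_le κ) h3]
  congr 1
  · rw [Finset.sum_eq_single κ]
    · rw [← sum_block_above σ n κ p (T κ) (hT κ) h2]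
      apply Finset.sum_congr rfl
      intro p' _
      simp
    · intro b hb hne
      rw [Finset.mem_Ioc] at hb
      apply Finset.sum_eq_zero
      intro p' _
      rw [if_neg (by omega), zero_mul]
    · intro hh
      rw [Finset.mem_Ioc] at hh
      omega
  · apply Finset.sum_congr rfl
    intro κ' hκ'
    rw [Finset.mem_Ioc] at hκ'
    unfold bs
    apply Finset.sum_congr rfl
    intro p' _
    rw [if_pos (Or.inl hκ'.1)]

/-- the rows `X` of the Gelfand–Cetlin pattern and the block coordinates `T` are related. -/
def Rel (σ : ℕ → Bool) (n : ℕ) (T X : ℕ → ℕ → ℝ) : Prop :=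
  ∀ κ j, 1 ≤ j → j ≤ κ → κ ≤ n →
    X κ j = if σ κ then X (κ + 1) j - (T κ (κ + 1 - j) - T κ (κ + 2 - j))
      else X (κ + 1) (j + 1) + (T κ j - T κ (j + 1))

lemma invariant (σ : ℕ → Bool) (n : ℕ) (lam : ℕ → ℤ) (T X : ℕ → ℕ → ℝ)
    (hT0 : ∀ κ, T κ 0 = 0) (hT : ∀ κ, T κ (κ + 1) = 0)
    (hR : Rel σ n T X)
    (htop : ∀ j, 1 ≤ j → j ≤ n → (lam j : ℝ) = X (n + 1) j - X (n + 1) (j + 1)) :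
    ∀ d κ, κ + d = n → ∀ j, 1 ≤ j → j ≤ κ →
      (lam (off σ n κ + j) : ℝ) + ∑ κ' ∈ Finset.Ioc κ n, bs σ n T κ' (off σ n κ + j) =
        X (κ + 1) j - X (κ + 1) (j + 1) := by
  intro d
  induction d with
  | zero =>
    intro κ hκ j h1 h2
    obtain rfl : κ = n := by omega
    simp only [off_self, zero_add, Finset.Ioc_self, Finset.sum_empty, add_zero]
    exact htop j h1 h2
  | succ d ih =>
    intro κ hκ j h1 h2
    have hsp := off_split σ n κ (κ + 1) (by omega) (by omega)
    have hst := off_succ_top σ κ κ le_rfl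
    rw [off_self] at hst
    have hsum : ∀ g : ℕ → ℝ, ∑ κ' ∈ Finset.Ioc κ n, g κ' =
        g (κ + 1) + ∑ κ' ∈ Finset.Ioc (κ + 1) n, g κ' := by
      intro g
      rw [← Finset.sum_Ioc_consecutive g (show κ ≤ κ + 1 by omega) (by omega : κ + 1 ≤ n)]
      simp
    rw [hsum]
    have r1 := hR (κ + 1) j h1 (by omega) (by omega)
    have r2 := hR (κ + 1) (j + 1) (by omega) (by omega) (by omega)
    cases hs : σ (κ + 1)
    · simp only [hs, Bool.false_eq_true, if_false] at hst r1 r2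
      have e : off σ n κ + j = off σ n (κ + 1) + (j + 1) := by omega
      have el : off σ n κ + j = lt σ n (κ + 1) (j + 1) := by
        simp only [lt, hs, Bool.false_eq_true, if_false]; omega
      have ihh := ih (κ + 1) (by omega) (j + 1) (by omega) (by omega)
      rw [← e] at ihh
      have hB : bs σ n T (κ + 1) (off σ n κ + j) = T (κ + 1) j - 2 * T (κ + 1) (j + 1)
          + T (κ + 1) (j + 2) := by
        rw [el]
        exact sum_block σ n (κ + 1) (j + 1) (T (κ + 1)) (hT0 _) (hT _) (by omega) (by omega)
      rw [hB, r1, r2]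
      have : j + 1 + 1 = j + 2 := by omega
      rw [this] at ihh ⊢
      linarith
    · simp only [hs, if_true] at hst r1 r2
      have e : off σ n κ + j = off σ n (κ + 1) + j := by omega
      have el : off σ n κ + j = lt σ n (κ + 1) (κ + 1 + 1 - j) := by
        simp only [lt, hs, if_true]; omega
      have ihh := ih (κ + 1) (by omega) j (by omega) (by omega)
      rw [← e] at ihh
      have hB : bs σ n T (κ + 1) (off σ n κ + j) = T (κ + 1) (κ + 1 - j)
          - 2 * T (κ + 1) (κ + 2 - j) + T (κ + 1) (κ + 3 - j) := by
        rw [el]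
        have := sum_block σ n (κ + 1) (κ + 1 + 1 - j) (T (κ + 1)) (hT0 _) (hT _) (by omega)
          (by omega)
        rw [show κ + 1 + 1 - j - 1 = κ + 1 - j by omega, show κ + 1 + 1 - j + 1 = κ + 3 - j by omega,
          show κ + 1 + 1 - j = κ + 2 - j by omega] at this
        rw [show κ + 1 + 1 - j = κ + 2 - j by omega]
        exact this
      rw [show κ + 1 + 1 - j = κ + 2 - j by omega, show κ + 1 + 2 - j = κ + 3 - j by omega] at r1
      rw [show κ + 1 + 1 - (j + 1) = κ + 1 - j by omega,
        show κ + 1 + 2 - (j + 1) = κ + 2 - j by omega] at r2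
      rw [hB, r1, r2]
      linarith

lemma poly_iff {σ : ℕ → Bool} {n : ℕ} {w : List ℕ} {f : Equiv.Perm ℕ}
    (h : SimVia w (canon σ n) f) (lam : ℕ → ℤ) (t x : Fin (Dim n) → ℝ)
    (hR : Rel σ n (tv n (fun κ p => f (tri κ + p)) t) (gcX n lam x)) :
    t ∈ stringPolytope n w lam ↔ x ∈ GCPolytope n lam := by
  set T := tv n (fun κ p => f (tri κ + p)) t with hTdef
  have hT0 : ∀ κ, T κ 0 = 0 := by intro κ; simp [hTdef, tv]
  have hT : ∀ κ, T κ (κ + 1) = 0 := by intro κ; simp [hTdef, tv]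
  have htop : ∀ j, 1 ≤ j → j ≤ n →
      (lam j : ℝ) = gcX n lam x (n + 1) j - gcX n lam x (n + 1) (j + 1) := by
    intro j h1 h2
    simp only [gcX, if_true, if_pos h2]
    have hI : Finset.Icc j n = insert j (Finset.Icc (j + 1) n) := by
      ext a; simp only [Finset.mem_Icc, Finset.mem_insert]; omega
    rw [hI, Finset.sum_insert (by simp)]
    split_ifs with hh
    · ring
    · rw [Finset.Icc_eq_empty (by omega)]; simp
  have hinv := invariant σ n lam T (gcX n lam x) hT0 hT hR htop
  have hstep : ∀ κ p, 1 ≤ p → p ≤ κ → κ ≤ n →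
      (0 ≤ T κ p - T κ (p + 1) ∧ T κ p ≤ (lam (lt σ n κ p) : ℝ) +
        (T κ (p + 1) + ∑ κ' ∈ Finset.Ioc κ n, bs σ n T κ' (lt σ n κ p)) ↔
      gcX n lam x κ (if σ κ then κ + 1 - p else p) ≤
          gcX n lam x (κ + 1) (if σ κ then κ + 1 - p else p) ∧
        gcX n lam x (κ + 1) ((if σ κ then κ + 1 - p else p) + 1) ≤
          gcX n lam x κ (if σ κ then κ + 1 - p else p)) := by
    intro κ p h1 h2 h3
    cases hs : σ κ
    · simp only [lt, hs, Bool.false_eq_true, if_false]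
      have r := hR κ p h1 h2 h3
      simp only [hs, Bool.false_eq_true, if_false] at r
      have i := hinv (n - κ) κ (by omega) p h1 h2
      constructor
      · rintro ⟨a, b⟩
        constructor <;> linarith
      · rintro ⟨a, b⟩
        constructor <;> linarith
    · simp only [lt, hs, if_true]
      have r := hR κ (κ + 1 - p) (by omega) (by omega) h3
      simp only [hs, if_true] at r
      rw [show κ + 1 - (κ + 1 - p) = p by omega, show κ + 2 - (κ + 1 - p) = p + 1 by omega] at r
      have i := hinv (n - κ) κ (by omega) (κ + 1 - p) (by omega) (by omega)
      rw [show off σ n κ + κ + 1 - p = off σ n κ + (κ + 1 - p) by omega]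
      constructor
      · rintro ⟨a, b⟩
        constructor <;> linarith
      · rintro ⟨a, b⟩
        constructor <;> linarith
  have hmem : t ∈ stringPolytope n w lam ↔ ∀ κ p, 1 ≤ p → p ≤ κ → κ ≤ n →
      (0 ≤ T κ p - T κ (p + 1) ∧ T κ p ≤ (lam (lt σ n κ p) : ℝ) +
        (T κ (p + 1) + ∑ κ' ∈ Finset.Ioc κ n, bs σ n T κ' (lt σ n κ p))) := by
    unfold stringPolytope
    rw [Set.mem_inter_iff, (Blk.of_sim h).mem_cone t, lam_iff h lam t]
    constructor
    · rintro ⟨a, b⟩ κ p h1 h2 h3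
      refine ⟨a κ p h1 h2 h3, ?_⟩
      rw [← sum_split σ n κ p T hT h1 h2 h3]
      exact b κ p h1 h2 h3
    · intro a
      refine ⟨fun κ p h1 h2 h3 => (a κ p h1 h2 h3).1, fun κ p h1 h2 h3 => ?_⟩
      have := (a κ p h1 h2 h3).2
      rw [← sum_split σ n κ p T hT h1 h2 h3] at this
      exact this
  rw [hmem]
  constructor
  · intro a κ j h0 h3 h1 h2
    have := (hstep κ (if σ κ then κ + 1 - j else j) (by split_ifs <;> omega)
      (by split_ifs <;> omega) h3).1 (a _ _ (by split_ifs <;> omega)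
      (by split_ifs <;> omega) h3)
    have e : (if σ κ then κ + 1 - (if σ κ then κ + 1 - j else j)
      else (if σ κ then κ + 1 - j else j)) = j := by split_ifs <;> omega
    rw [e] at this
    exact this
  · intro a κ p h1 h2 h3
    rw [hstep κ p h1 h2 h3]
    exact a κ _ (by omega) h3 (by split_ifs <;> omega) (by split_ifs <;> omega)


/-! ### Unimodularity -/

/-- integral affine functions. -/
def IntAff {m : ℕ} (g : (Fin m → ℝ) → ℝ) : Prop :=
  ∃ (c : Fin m → ℤ) (d : ℤ), ∀ x, g x = (∑ j, (c j : ℝ) * x j) + (d : ℝ)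

namespace IntAff

variable {m : ℕ}

lemma const (d : ℤ) : IntAff (fun _ : Fin m → ℝ => (d : ℝ)) := ⟨0, d, by simp⟩

lemma coord (i : Fin m) : IntAff (fun x : Fin m → ℝ => x i) := by
  refine ⟨fun j => if j = i then 1 else 0, 0, fun x => ?_⟩
  simp

lemma add {g h : (Fin m → ℝ) → ℝ} (hg : IntAff g) (hh : IntAff h) :
    IntAff (fun x => g x + h x) := by
  obtain ⟨c, d, e⟩ := hg
  obtain ⟨c', d', e'⟩ := hh
  refine ⟨fun j => c j + c' j, d + d', fun x => ?_⟩
  beta_reduce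
  rw [e, e']
  push_cast
  simp only [add_mul, Finset.sum_add_distrib]
  ring

lemma neg {g : (Fin m → ℝ) → ℝ} (hg : IntAff g) : IntAff (fun x => - g x) := by
  obtain ⟨c, d, e⟩ := hg
  refine ⟨fun j => - c j, - d, fun x => ?_⟩
  beta_reduce
  rw [e]
  push_cast
  simp only [neg_mul, Finset.sum_neg_distrib]
  ring

lemma sub {g h : (Fin m → ℝ) → ℝ} (hg : IntAff g) (hh : IntAff h) :
    IntAff (fun x => g x - h x) := by
  simp only [sub_eq_add_neg]
  exact hg.add hh.neg

lemma sum {ι : Type} (s : Finset ι) {g : ι → (Fin m → ℝ) → ℝ} (hg : ∀ i, IntAff (g i)) :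
    IntAff (fun x => ∑ i ∈ s, g i x) := by
  induction s using Finset.induction_on with
  | empty =>
    have := const (m := m) 0
    simpa using this
  | insert a s ha ih =>
    simp only [Finset.sum_insert ha]
    exact (hg a).add ih

end IntAff

lemma unimod_of {m : ℕ} (P Q : Set (Fin m → ℝ)) (F G : (Fin m → ℝ) → (Fin m → ℝ))
    (hF : ∀ i, IntAff (fun x => F x i)) (hG : ∀ i, IntAff (fun x => G x i))
    (hGF : ∀ x, G (F x) = x) (hPQ : ∀ x, x ∈ P ↔ F x ∈ Q) : UnimodEquiv P Q := by
  choose c v hF using hF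
  choose c' v' hG using hG
  beta_reduce at hF hG
  set M : Matrix (Fin m) (Fin m) ℤ := Matrix.of c with hM
  set M' : Matrix (Fin m) (Fin m) ℤ := Matrix.of c' with hM'
  have hF' : ∀ x, F x = (M.map (Int.cast : ℤ → ℝ)).mulVec x + fun i => (v i : ℝ) := by
    intro x; ext i
    rw [hF]
    simp [Matrix.mulVec, dotProduct, hM]
  have hG' : ∀ x, G x = (M'.map (Int.cast : ℤ → ℝ)).mulVec x + fun i => (v' i : ℝ) := by
    intro x; ext i
    rw [hG]
    simp [Matrix.mulVec, dotProduct, hM']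
  have hlin : ∀ x, ((M' * M).map (Int.cast : ℤ → ℝ)).mulVec x = x := by
    intro x
    have h0 := hGF 0
    have h1 := hGF x
    rw [hF', hG', Matrix.mulVec_add] at h0 h1
    rw [Matrix.mulVec_zero, Matrix.mulVec_zero] at h0
    have e : (M' * M).map (Int.cast : ℤ → ℝ) =
        M'.map (Int.cast : ℤ → ℝ) * M.map (Int.cast : ℤ → ℝ) := by
      have := Matrix.map_mul (L := M') (M := M) (f := Int.castRingHom ℝ)
      simpa using this
    rw [e, ← Matrix.mulVec_mulVec]
    rw [zero_add] at h0
    rw [add_assoc, h0, add_zero] at h1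
    exact h1
  have hMM : M' * M = 1 := by
    ext i j
    have := congrFun (hlin (Pi.single j 1)) i
    rw [Matrix.mulVec_single_one] at this
    simp only [Matrix.col_apply, Matrix.map_apply] at this
    rw [Matrix.one_apply]
    rw [Pi.single_apply] at this
    split_ifs at this ⊢ <;> exact_mod_cast this
  have hMM' : M * M' = 1 := mul_eq_one_comm.1 hMM
  refine ⟨M, v, ?_, ?_⟩
  · have : M.det * M'.det = 1 := by rw [← Matrix.det_mul, hMM', Matrix.det_one]
    exact IsUnit.of_mul_eq_one _ this
  · have hfun : (fun (x : Fin m → ℝ) i => (∑ j, (M i j : ℝ) * x j) + (v i : ℝ)) = F := by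
      funext x i
      exact (hF i x).symm
    rw [hfun]
    ext y
    constructor
    · intro hy
      have hFx : F ((M'.map (Int.cast : ℤ → ℝ)).mulVec (y - fun i => (v i : ℝ))) = y := by
        rw [hF', Matrix.mulVec_mulVec]
        have e : M.map (Int.cast : ℤ → ℝ) * M'.map (Int.cast : ℤ → ℝ) = 1 := by
          have := Matrix.map_mul (L := M) (M := M') (f := Int.castRingHom ℝ)
          rw [hMM'] at this
          simpa using this.symm
        rw [e, Matrix.one_mulVec, sub_add_cancel]
      exact ⟨_, (hPQ _).2 (by rw [hFx]; exact hy), hFx⟩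
    · rintro ⟨x, hx, rfl⟩
      exact (hPQ x).1 hx

/-- the rows of the pattern, from the top down. -/
def rowX (σ : ℕ → Bool) (n : ℕ) (lam : ℕ → ℤ) (T : ℕ → ℕ → ℝ) : ℕ → ℕ → ℝ
  | 0, j => if j ≤ n then ∑ t ∈ Finset.Icc j n, (lam t : ℝ) else 0
  | d + 1, j => if σ (n - d) then
        rowX σ n lam T d j - (T (n - d) (n - d + 1 - j) - T (n - d) (n - d + 2 - j))
      else rowX σ n lam T d (j + 1) + (T (n - d) j - T (n - d) (j + 1))

lemma rowX_aff (σ : ℕ → Bool) (n : ℕ) (lam : ℕ → ℤ) {m : ℕ} (T : (Fin m → ℝ) → ℕ → ℕ → ℝ)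
    (hT : ∀ κ p, IntAff (fun t => T t κ p)) :
    ∀ d j, IntAff (fun t => rowX σ n lam (T t) d j) := by
  intro d
  induction d with
  | zero =>
    intro j
    simp only [rowX]
    split_ifs
    · exact IntAff.sum _ (fun i => IntAff.const (lam i))
    · have := IntAff.const (m := m) 0
      simpa using this
  | succ d ih =>
    intro j
    simp only [rowX]
    split_ifs
    · exact (ih j).sub ((hT _ _).sub (hT _ _))
    · exact (ih _).add ((hT _ _).sub (hT _ _))

lemma entry_aff (n a : ℕ) : IntAff (fun t => entry n t a) := by
  unfold entry
  split_ifs with h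
  · exact IntAff.coord _
  · have := IntAff.const (m := Dim n) 0
    simpa using this

lemma tv_aff (n : ℕ) (nd : ℕ → ℕ → ℕ) (κ p : ℕ) : IntAff (fun t => tv n nd t κ p) := by
  unfold tv
  split_ifs with h
  · exact entry_aff _ _
  · have := IntAff.const (m := Dim n) 0
    simpa using this

lemma gcX_aff (n : ℕ) (lam : ℕ → ℤ) (k j : ℕ) : IntAff (fun x => gcX n lam x k j) := by
  unfold gcX
  split_ifs with h1 h2 h3
  · exact IntAff.sum _ (fun i => IntAff.const (lam i))
  · have := IntAff.const (m := Dim n) 0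
    simpa using this
  · exact IntAff.coord _
  · have := IntAff.const (m := Dim n) 0
    simpa using this

lemma telescope (T : ℕ → ℝ) (a b : ℕ) (h : a ≤ b) :
    ∑ j ∈ Finset.Ioc a b, (T j - T (j + 1)) = T (a + 1) - T (b + 1) := by
  induction b, h using Nat.le_induction with
  | base => simp
  | succ b hb ih => rw [Finset.sum_Ioc_succ_top (by omega), ih]; ring

lemma telescope' (T : ℕ → ℝ) (κ b : ℕ) (h : b ≤ κ) :
    ∑ j ∈ Finset.Ioc 0 b, (T (κ + 1 - j) - T (κ + 2 - j)) = T (κ + 1 - b) - T (κ + 1) := by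
  induction b with
  | zero => simp
  | succ b ih =>
    rw [Finset.sum_Ioc_succ_top (by omega), ih (by omega),
      show κ + 2 - (b + 1) = κ + 1 - b by omega]
    ring

/-- recovering block coordinates from the pattern. -/
def backT (σ : ℕ → Bool) (X : ℕ → ℕ → ℝ) (κ p : ℕ) : ℝ :=
  if σ κ then ∑ j ∈ Finset.Ioc 0 (κ + 1 - p), (X (κ + 1) j - X κ j)
  else ∑ j ∈ Finset.Ioc (p - 1) κ, (X κ j - X (κ + 1) (j + 1))

lemma backT_eq (σ : ℕ → Bool) (n : ℕ) (T X : ℕ → ℕ → ℝ) (hT : ∀ κ, T κ (κ + 1) = 0)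
    (hR : Rel σ n T X) (κ p : ℕ) (h1 : 1 ≤ p) (h2 : p ≤ κ) (h3 : κ ≤ n) :
    backT σ X κ p = T κ p := by
  unfold backT
  cases hs : σ κ
  · simp only [Bool.false_eq_true, if_false]
    rw [Finset.sum_congr rfl (g := fun j => T κ j - T κ (j + 1)), telescope _ _ _ (by omega), hT,
      Nat.sub_add_cancel h1, sub_zero]
    intro j hj
    rw [Finset.mem_Ioc] at hj
    rw [hR κ j (by omega) hj.2 h3]
    simp [hs]
  · simp only [if_true]
    rw [Finset.sum_congr rfl (g := fun j => T κ (κ + 1 - j) - T κ (κ + 2 - j)),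
      telescope' _ _ _ (by omega), hT, show κ + 1 - (κ + 1 - p) = p by omega, sub_zero]
    intro j hj
    rw [Finset.mem_Ioc] at hj
    rw [hR κ j (by omega) (by omega) h3]
    simp [hs]

lemma backT_aff (σ : ℕ → Bool) (n : ℕ) (lam : ℕ → ℤ) (κ p : ℕ) :
    IntAff (fun x => backT σ (gcX n lam x) κ p) := by
  unfold backT
  split_ifs
  · exact IntAff.sum _ (fun j => (gcX_aff _ _ _ _).sub (gcX_aff _ _ _ _))
  · exact IntAff.sum _ (fun j => (gcX_aff _ _ _ _).sub (gcX_aff _ _ _ _))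

lemma unimod_sim {σ : ℕ → Bool} {n : ℕ} {w : List ℕ} {f : Equiv.Perm ℕ}
    (h : SimVia w (canon σ n) f) (lam : ℕ → ℤ) :
    UnimodEquiv (stringPolytope n w lam) (GCPolytope n lam) := by
  have hb := Blk.of_sim h
  have hlen : w.length = Dim n := by rw [h.len, canon_length, tri_eq]
  have hdec : ∀ i : Fin (Dim n), ∃ s : ℕ × ℕ, 1 ≤ s.2 ∧ s.2 ≤ s.1 ∧ s.1 ≤ n ∧
      (i : ℕ) + 1 = tri s.1 + s.2 := by
    intro i
    obtain ⟨κ, p, a, b, c, d⟩ := tri_surj n (i + 1) (by omega) (by rw [tri_eq]; omega)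
    exact ⟨(κ, p), a, b, c, d⟩
  have hdec' : ∀ i : Fin (Dim n), ∃ s : ℕ × ℕ, 1 ≤ s.2 ∧ s.2 ≤ s.1 ∧ s.1 ≤ n ∧
      (i : ℕ) + 1 = f (tri s.1 + s.2) := by
    intro i
    obtain ⟨κ, p, a, b, c, d⟩ := hb.surj (i + 1) ⟨by omega, by rw [hlen]; omega⟩
    exact ⟨(κ, p), a, b, c, d⟩
  choose s s1 s2 s3 s4 using hdec
  choose r r1 r2 r3 r4 using hdec'
  let T := tv n (fun κ p => f (tri κ + p))
  let F : (Fin (Dim n) → ℝ) → (Fin (Dim n) → ℝ) := fun t i =>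
    rowX σ n lam (T t) (n + 1 - (s i).1) (s i).2
  let G : (Fin (Dim n) → ℝ) → (Fin (Dim n) → ℝ) := fun x i =>
    backT σ (gcX n lam x) (r i).1 (r i).2
  have hX : ∀ t κ j, 1 ≤ j → (j ≤ κ ∧ κ ≤ n ∨ κ = n + 1) →
      gcX n lam (F t) κ j = rowX σ n lam (T t) (n + 1 - κ) j := by
    intro t κ j h1 h2
    rcases h2 with ⟨h2, h3⟩ | rfl
    · unfold gcX
      rw [if_neg (by omega)]
      have hlt : κ * (κ - 1) / 2 + (j - 1) < Dim n := by
        have := tri_add_le (show κ < n + 1 by omega) h2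
        rw [tri_eq] at this
        unfold tri at this
        omega
      rw [dif_pos hlt]
      have e := s4 ⟨κ * (κ - 1) / 2 + (j - 1), hlt⟩
      obtain ⟨e1, e2⟩ := tri_inj h1 h2 (s1 ⟨κ * (κ - 1) / 2 + (j - 1), hlt⟩)
        (s2 ⟨κ * (κ - 1) / 2 + (j - 1), hlt⟩) (by
          rw [← e]; simp only [tri]; omega)
      simp only [F]
      rw [← e1, ← e2]
    · simp [gcX, rowX]
  have hR : ∀ t, Rel σ n (T t) (gcX n lam (F t)) := by
    intro t κ j h1 h2 h3
    rw [hX t κ j h1 (by omega), hX t (κ + 1) j h1 (by omega),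
      hX t (κ + 1) (j + 1) (by omega) (by omega)]
    obtain ⟨d, hd⟩ : ∃ d, d + κ = n := ⟨n - κ, by omega⟩
    rw [show n + 1 - κ = d + 1 by omega, show n + 1 - (κ + 1) = d by omega, rowX,
      show n - d = κ by omega]
  refine unimod_of _ _ F G (fun i => ?_) (fun i => ?_) (fun t => ?_) (fun t => ?_)
  · exact rowX_aff σ n lam T (fun κ p => tv_aff n _ κ p) _ _
  · exact backT_aff σ n lam _ _
  · funext i
    simp only [G]
    rw [backT_eq σ n (T t) _ (by intro κ; simp [T, tv]) (hR t) _ _ (r1 i) (r2 i) (r3 i)]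
    simp only [T, tv]
    rw [if_pos ⟨r1 i, r2 i⟩, ← r4 i]
    simp [entry]
  · exact poly_iff h lam t (F t) (hR t)

/-- Theorem: Gelfand–Cetlin type string polytopes.
If there is a sequence `(σ_1,…,σ_n) ∈ {A,D}^n` with
`ind_{σ_k}(C_{σ_{k+1}} ∘ ⋯ ∘ C_{σ_n}(i)) = 0` for all `k = n, …, 1`, then for every
dominant integral weight `λ` the string polytope `Δ_i(λ)` is unimodularly equivalent
to the Gelfand–Cetlin polytope `GC(λ)`. -/
theorem statement16 (n : ℕ) (hn : 1 ≤ n) (i : List ℕ) (hi : IsReduced n i)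
    (hsimp : SimplicialWord n i) (lam : ℕ → ℤ) (hlam : Dominant n lam) :
    UnimodEquiv (stringPolytope n i lam) (GCPolytope n lam) := by
  obtain ⟨σ, f, h⟩ := exists_sim n i hi hsimp
  exact unimod_sim h lam

end StringPolytope
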